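/- arXiv:1604.02947 — 4 statements merged into one kernel-verified Lean document; each statement's English description precedes it below -/
import Mathlib

section
/- Let X be a pure d-dimensional ε-colorful expander. Then for every 0 ≤ i < d, the conductance of the i-graph of X satisfies Φ(G_i(X)) ≥ ε/(i+2). -/
/-!
Every edge of `G_i(X)` between `σ` and `τ` is charged to the `(i+1)`-face `ρ = σ ∪ τ`, and `ρ`
has weight `deg ρ`. Two double counts turn graph quantities into face weights:

* an `(i+1)`-face has exactly `i + 2` facets, and the `(i+1)`-faces above an `i`-face `σ` have
  total weight `(d - i) deg σ` (`sum_deg_above`); hence `mdeg σ = (i + 1)(d - i) deg σ`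
  (`mdeg_adjG`), and `(i + 2) Σ_{X(i+1)} deg = (d - i) Σ_{X(i)} deg` (`sum_deg_succ`);
* if `W` is the set of `i`-faces in a cut `S`, an expanding face `ρ ∈ ψ(W)` with `a` facets in `W`
  carries `a (i + 2 - a) deg ρ ≥ (i + 1) deg ρ` cut edges (`psi_le_cut`).

So volume is proportional to the norm, `vol S ≤ vol V / 2` becomes `‖W‖ ≤ 1/2`, and
`|E(S, S̄)| / vol S ≥ Σ_{ψ(W)} deg / ((d - i) Σ_W deg) = (‖ψ(W)‖ / ‖W‖) / (i + 2) ≥ ε / (i + 2)`.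

The infimum defining the conductance is over a nonempty set, as it must be because `sInf ∅ = 0`:
a loopless multigraph has `vol {v} ≤ vol V / 2` for every vertex `v`.
-/

open Finset

open scoped Classical

noncomputable section

/-- A pure `d`-dimensional simplicial complex on a finite vertex set `V`: a collection of
finite subsets of `V` (the faces), containing the empty face, closed under taking subsets,
in which every face is contained in a face of cardinality `d+1`. -/
structure SC (V : Type) [DecidableEq V] [Fintype V] (d : ℕ) where
  faces : Finset (Finset V)
  empty_mem : ∅ ∈ faces
  down_closed : ∀ σ ∈ faces, ∀ τ ⊆ σ, τ ∈ faces
  pure : ∀ σ ∈ faces, ∃ τ ∈ faces, σ ⊆ τ ∧ τ.card = d + 1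

namespace SC

variable {V : Type} [DecidableEq V] [Fintype V] {d : ℕ}

/-- The faces of cardinality `k`, i.e. the set `X(k-1)` of `(k-1)`-dimensional faces. -/
def fc (X : SC V d) (k : ℕ) : Finset (Finset V) :=
  X.faces.filter fun σ => σ.card = k

/-- The degree of a face: the number of top (`d`-dimensional) faces containing it. -/
def deg (X : SC V d) (σ : Finset V) : ℕ :=
  ((X.fc (d + 1)).filter fun τ => σ ⊆ τ).card

/-- The norm of a set `W` of faces of cardinality `k`:
`‖W‖ = (Σ_{σ∈W} deg σ) / (Σ_{τ∈X(k-1)} deg τ)`. -/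
def norm (X : SC V d) (k : ℕ) (W : Finset (Finset V)) : ℝ :=
  (∑ σ ∈ (X.fc k).filter (· ∈ W), (X.deg σ : ℝ)) / ∑ σ ∈ X.fc k, (X.deg σ : ℝ)

/-- `‖A_σ‖_σ`: the norm, computed inside the link of `σ`, of the localization to the link
of a set `A` of cardinality-`k` faces of `X`.  (The faces of the link of `σ` correspond
bijectively to the faces `ρ ⊇ σ` of `X` via `τ ↦ σ ∪ τ`, and this correspondence
preserves degrees.) -/
def linkNorm (X : SC V d) (σ : Finset V) (k : ℕ) (A : Finset (Finset V)) : ℝ :=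
  (∑ ρ ∈ (X.fc k).filter (fun ρ => σ ⊆ ρ ∧ ρ ∈ A), (X.deg ρ : ℝ)) /
    ∑ ρ ∈ (X.fc k).filter (fun ρ => σ ⊆ ρ), (X.deg ρ : ℝ)

/-- For a set `S` of vertices, the norm `‖·‖_σ` in the link of `σ` of the set of
`(m-1)`-dimensional faces of the link all of whose vertices lie in `S`.
For `m = 1` this is `‖S‖_σ` and for `m = 2` it is `‖E(S)‖_σ`. -/
def linkSubsetNorm (X : SC V d) (σ : Finset V) (m : ℕ) (S : Finset V) : ℝ :=
  (∑ ρ ∈ (X.fc (σ.card + m)).filter (fun ρ => σ ⊆ ρ ∧ ρ \ σ ⊆ S), (X.deg ρ : ℝ)) /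
    ∑ ρ ∈ (X.fc (σ.card + m)).filter (fun ρ => σ ⊆ ρ), (X.deg ρ : ℝ)

/-- `X` is an `α`-skeleton expander: for every face `σ ∈ X` (including `σ = ∅`) and every
set `S` of vertices of the link of `σ`, `‖E(S)‖_σ ≤ ‖S‖_σ (‖S‖_σ + α)`. -/
def IsSkeletonExpander (X : SC V d) (α : ℝ) : Prop :=
  ∀ σ ∈ X.faces, ∀ S : Finset V,
    X.linkSubsetNorm σ 2 S ≤ X.linkSubsetNorm σ 1 S * (X.linkSubsetNorm σ 1 S + α)

/-- The expanding faces `ψ(W)` of a set `W` of cardinality-`k` faces: the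
cardinality-`(k+1)` faces containing both a cardinality-`k` face in `W` and a
cardinality-`k` face not in `W`. -/
def psi (X : SC V d) (k : ℕ) (W : Finset (Finset V)) : Finset (Finset V) :=
  (X.fc (k + 1)).filter fun τ =>
    (∃ σ ⊆ τ, σ.card = k ∧ σ ∈ W) ∧ ∃ σ ⊆ τ, σ.card = k ∧ σ ∉ W

/-- `X` is an `ε`-colorful expander: for every `0 ≤ i < d` and every `i`-cochain `W` with
`0 < ‖W‖ ≤ 1/2`, one has `‖ψ(W)‖/‖W‖ ≥ ε`. -/
def IsColorfulExpander (X : SC V d) (ε : ℝ) : Prop :=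
  ∀ i : ℕ, i < d → ∀ W ⊆ X.fc (i + 1),
    0 < X.norm (i + 1) W → X.norm (i + 1) W ≤ 1 / 2 →
    ε ≤ X.norm (i + 2) (X.psi (i + 1) W) / X.norm (i + 1) W

/-- The container `Γ(W)` of a set `W` of cardinality-`k` faces: the cardinality-`(k+1)`
faces containing at least one cardinality-`k` face of `W`. -/
def container (X : SC V d) (k : ℕ) (W : Finset (Finset V)) : Finset (Finset V) :=
  (X.fc (k + 1)).filter fun τ => ∃ σ ⊆ τ, σ.card = k ∧ σ ∈ W

/-- Fat faces: for an `i`-cochain `W` and fatness constant `η`, `X.fat i W η m` is the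
set `S^{i-m}(W)` of fat faces of dimension `i - m` (so of cardinality `i + 1 - m`);
`m = i + 1` gives `S^{-1}(W)`. -/
def fat (X : SC V d) (i : ℕ) (W : Finset (Finset V)) (η : ℝ) : ℕ → Finset (Finset V)
  | 0 => (X.fc (i + 1)).filter (· ∈ W)
  | m + 1 => (X.fc (i - m)).filter fun σ =>
      η ^ 2 ^ m ≤ X.linkNorm σ (i - m + 1) (fat X i W η m)

/-- Full faces: `X.full i W η j` is `F^j(W)`, the set of cardinality-`(j+1)` faces all of
whose cardinality-`j` subsets lie in `S^{j-1}(W) = X.fat i W η (i + 1 - j)`. -/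
def full (X : SC V d) (i : ℕ) (W : Finset (Finset V)) (η : ℝ) (j : ℕ) :
    Finset (Finset V) :=
  (X.fc (j + 1)).filter fun τ => ∀ σ ⊆ τ, σ.card = j → σ ∈ X.fat i W η (i + 1 - j)

/-- `X.prNI ka kb A B` is the probability `Pr[P_{ka-1} ∈ A ∧ P_{kb-1} ∉ B]` for the chain
`P_d ⊃ P_{d-1} ⊃ ⋯` in which `P_d` is a uniformly random top face and each `P_{l-1}` is
obtained from `P_l` by deleting a uniformly random vertex.  (Given `P_{ka-1} = σ`,
the face `P_{kb-1}` is a uniformly random cardinality-`kb` subset of `σ`, and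
`Pr[P_{ka-1} = σ] = deg σ / Σ_{τ ∈ X(ka-1)} deg τ`.) -/
def prNI (X : SC V d) (ka kb : ℕ) (A B : Finset (Finset V)) : ℝ :=
  (∑ σ ∈ (X.fc ka).filter (· ∈ A),
      (X.deg σ : ℝ) * (((σ.powersetCard kb).filter (· ∉ B)).card : ℝ)) /
    ((ka.choose kb : ℝ) * ∑ σ ∈ X.fc ka, (X.deg σ : ℝ))

end SC

/-! ### Multigraphs, given by symmetric adjacency-count matrices -/

/-- Degree of a vertex in the multigraph with adjacency counts `A`. -/
def mdeg {U : Type} [Fintype U] (A : U → U → ℕ) (v : U) : ℕ := ∑ u, A v u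

/-- The transition matrix `DA` of the random walk on the multigraph `A`. -/
def transition {U : Type} [Fintype U] (A : U → U → ℕ) : Matrix U U ℝ :=
  Matrix.of fun u v => (A u v : ℝ) / (mdeg A u : ℝ)

/-- The normalized adjacency matrix `Ã = D^(1/2) A D^(1/2)`. -/
def normAdj {U : Type} [Fintype U] (A : U → U → ℕ) : Matrix U U ℝ :=
  Matrix.of fun u v => (A u v : ℝ) / (Real.sqrt (mdeg A u) * Real.sqrt (mdeg A v))

/-- The stationary distribution `π(v) = deg v / Σ_u deg u`. -/
def statDist {U : Type} [Fintype U] (A : U → U → ℕ) (v : U) : ℝ :=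
  (mdeg A v : ℝ) / ∑ u, (mdeg A u : ℝ)

/-- Maximum degree. -/
def dmaxDeg {U : Type} [Fintype U] (A : U → U → ℕ) : ℕ := ⨆ v, mdeg A v

/-- Minimum degree. -/
def dminDeg {U : Type} [Fintype U] (A : U → U → ℕ) : ℕ := ⨅ v, mdeg A v

/-- The random walk on the multigraph `A` is `μ`-rapidly mixing: for every initial
probability distribution `π0` and every `t`, `‖π0 (DA)^t − π‖₂ ≤ √(dmax/dmin) μ^t`. -/
def IsRapidMixing {U : Type} [Fintype U] [DecidableEq U] (A : U → U → ℕ) (μ : ℝ) : Prop :=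
  ∀ π0 : U → ℝ, (∀ v, 0 ≤ π0 v) → ∑ v, π0 v = 1 → ∀ t : ℕ,
    Real.sqrt (∑ v, (Matrix.vecMul π0 (transition A ^ t) v - statDist A v) ^ 2) ≤
      Real.sqrt ((dmaxDeg A : ℝ) / (dminDeg A : ℝ)) * μ ^ t

/-- The lazy version of a multigraph: add `deg v` self-loops at every vertex `v`. -/
def lazy {U : Type} [Fintype U] [DecidableEq U] (A : U → U → ℕ) : U → U → ℕ :=
  fun u v => A u v + if u = v then mdeg A u else 0

/-- `|E(S, S̄)|`: the number of edges with one endpoint in `S` and one in its complement. -/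
def cutEdges {U : Type} [Fintype U] [DecidableEq U] (A : U → U → ℕ) (S : Finset U) : ℝ :=
  ∑ u ∈ S, ∑ v ∈ Sᶜ, (A u v : ℝ)

/-- `vol S = Σ_{v ∈ S} deg v`. -/
def vol {U : Type} [Fintype U] (A : U → U → ℕ) (S : Finset U) : ℝ :=
  ∑ v ∈ S, (mdeg A v : ℝ)

/-- The conductance `Φ(G) = min { |E(S,S̄)|/vol S : ∅ ≠ S, vol S ≤ vol V / 2 }`. -/
def conductance {U : Type} [Fintype U] [DecidableEq U] (A : U → U → ℕ) : ℝ :=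
  sInf { x : ℝ | ∃ S : Finset U, S.Nonempty ∧ vol A S ≤ vol A Finset.univ / 2 ∧
    x = cutEdges A S / vol A S }

/-- `|E(T)|`: the number of edges with both endpoints in `T`. -/
def edgesWithin {U : Type} [Fintype U] (A : U → U → ℕ) (T : Finset U) : ℝ :=
  ((∑ u ∈ T, ∑ v ∈ T, (A u v : ℝ)) + ∑ v ∈ T, (A v v : ℝ)) / 2

/-- The bipartiteness ratio
`β(G) = min {(|E(S,S̄)| + 2(|E(S1)| + |E(S2)|))/vol S : S = S1 ⊔ S2 ≠ ∅}`. -/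
def bipRatio {U : Type} [Fintype U] [DecidableEq U] (A : U → U → ℕ) : ℝ :=
  sInf { x : ℝ | ∃ S1 S2 : Finset U, (S1 ∪ S2).Nonempty ∧ Disjoint S1 S2 ∧
    x = (cutEdges A (S1 ∪ S2) + 2 * (edgesWithin A S1 + edgesWithin A S2)) /
      vol A (S1 ∪ S2) }

/-- The adjacency counts of the `i`-graph `G_i(X)`: its vertices are the `i`-faces of `X`
(cardinality `i+1`), and two neighboring `i`-faces `σ ∼ τ` (i.e. `σ ∪ τ ∈ X(i+1)`) are
joined by `deg (σ ∪ τ)` parallel edges. -/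
def SC.adjG {V : Type} [DecidableEq V] [Fintype V] {d : ℕ} (X : SC V d) (i : ℕ) :
    {σ // σ ∈ X.fc (i + 1)} → {σ // σ ∈ X.fc (i + 1)} → ℕ :=
  fun σ τ => if σ.1 ∪ τ.1 ∈ X.fc (i + 2) then X.deg (σ.1 ∪ τ.1) else 0

end

namespace SC

variable {V : Type} [DecidableEq V] [Fintype V] {d : ℕ}

lemma mem_fc (X : SC V d) {k : ℕ} {σ : Finset V} : σ ∈ X.fc k ↔ σ ∈ X.faces ∧ σ.card = k := by
  simp [fc]

lemma fc_filter_subset (X : SC V d) {k l : ℕ} {ρ : Finset V} (hρ : ρ ∈ X.fc l) :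
    (X.fc k).filter (fun σ => σ ⊆ ρ) = ρ.powersetCard k := by
  ext σ
  simp only [Finset.mem_filter, mem_fc, Finset.mem_powersetCard]
  have := X.down_closed ρ (X.mem_fc.1 hρ).1 σ
  tauto

lemma card_facets (X : SC V d) {k : ℕ} {ρ : Finset V} (hρ : ρ ∈ X.fc (k + 1)) :
    ((X.fc k).filter (fun σ => σ ⊆ ρ)).card = k + 1 := by
  rw [X.fc_filter_subset hρ, Finset.card_powersetCard, (X.mem_fc.1 hρ).2]
  simp

lemma card_between (X : SC V d) {k l : ℕ} {σ T : Finset V} (hσ : σ.card = k)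
    (hT : T ∈ X.fc l) (h : σ ⊆ T) :
    ((X.fc (k + 1)).filter (fun ρ => σ ⊆ ρ ∧ ρ ⊆ T)).card = l - k := by
  have hT' := X.mem_fc.1 hT
  have : (X.fc (k + 1)).filter (fun ρ => σ ⊆ ρ ∧ ρ ⊆ T) = (T \ σ).image (fun v => insert v σ) := by
    ext ρ
    simp only [Finset.mem_filter, mem_fc, Finset.mem_image, Finset.mem_sdiff]
    constructor
    · rintro ⟨⟨_, hc⟩, h1, h2⟩
      obtain ⟨v, hv, rfl⟩ := (Finset.covBy_iff_exists_insert).1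
        ((Finset.covBy_iff_card_sdiff_eq_one).2
          ⟨h1, by rw [Finset.card_sdiff_of_subset h1]; omega⟩)
      exact ⟨v, ⟨h2 (Finset.mem_insert_self _ _), hv⟩, rfl⟩
    · rintro ⟨v, ⟨hvT, hv⟩, rfl⟩
      have hs : insert v σ ⊆ T := Finset.insert_subset hvT h
      exact ⟨⟨X.down_closed T hT'.1 _ hs, by rw [Finset.card_insert_of_notMem hv, hσ]⟩,
        Finset.subset_insert _ _, hs⟩
  rw [this, Finset.card_image_of_injOn, Finset.card_sdiff_of_subset h, hT'.2, hσ]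
  intro v hv w hw hvw
  simp only [Finset.coe_sdiff, Set.mem_sdiff, Finset.mem_coe] at hv hw
  have hvw' : insert v σ = insert w σ := hvw
  have : v ∈ insert w σ := hvw' ▸ Finset.mem_insert_self v σ
  simpa [hv.2] using this

/-- Counting flags `σ ⊂ ρ ⊆ T` with `T` a top face, first by `ρ` and then by `T`. -/
lemma sum_deg_above (X : SC V d) {k : ℕ} {σ : Finset V} (hσ : σ.card = k) :
    ∑ ρ ∈ (X.fc (k + 1)).filter (fun ρ => σ ⊆ ρ), X.deg ρ = (d + 1 - k) * X.deg σ := by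
  have h1 : ∀ ρ, X.deg ρ = ∑ T ∈ X.fc (d + 1), if ρ ⊆ T then 1 else 0 := fun ρ => by
    simp [deg]
  simp_rw [h1]
  rw [Finset.sum_comm, Finset.mul_sum]
  refine Finset.sum_congr rfl fun T hT => ?_
  rw [← Finset.sum_filter, Finset.filter_filter, ← Finset.card_eq_sum_ones]
  split_ifs with h
  · rw [X.card_between hσ hT h, mul_one]
  · rw [mul_zero, Finset.card_eq_zero, Finset.filter_eq_empty_iff]
    rintro ρ - ⟨h1, h2⟩
    exact h (h1.trans h2)

lemma sum_deg_succ (X : SC V d) (k : ℕ) :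
    (k + 1) * ∑ ρ ∈ X.fc (k + 1), X.deg ρ = (d + 1 - k) * ∑ σ ∈ X.fc k, X.deg σ := by
  rw [Finset.mul_sum, Finset.mul_sum]
  have h1 : ∀ σ ∈ X.fc k, (d + 1 - k) * X.deg σ
      = ∑ ρ ∈ X.fc (k + 1), if σ ⊆ ρ then X.deg ρ else 0 := fun σ hσ => by
    rw [← X.sum_deg_above (X.mem_fc.1 hσ).2, Finset.sum_filter]
  rw [Finset.sum_congr rfl h1, Finset.sum_comm]
  refine Finset.sum_congr rfl fun ρ hρ => ?_
  rw [← Finset.sum_filter, Finset.sum_const, X.card_facets hρ, smul_eq_mul]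

/-- The adjacency count of `G_{k-1}(X)`, as a function on all pairs of vertex sets. -/
def adjF (X : SC V d) (k : ℕ) (σ τ : Finset V) : ℕ :=
  if σ ∪ τ ∈ X.fc (k + 1) then X.deg (σ ∪ τ) else 0

lemma union_eq_iff {U : Type} [DecidableEq U] {k : ℕ} {σ τ ρ : Finset U} (hσ : σ.card = k) (hτ : τ.card = k)
    (hρ : ρ.card = k + 1) : σ ∪ τ = ρ ↔ σ ⊆ ρ ∧ τ ⊆ ρ ∧ σ ≠ τ := by
  constructor
  · rintro rfl
    refine ⟨Finset.subset_union_left, Finset.subset_union_right, ?_⟩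
    rintro rfl
    rw [Finset.union_self] at hρ
    omega
  · rintro ⟨h1, h2, h3⟩
    refine Finset.eq_of_subset_of_card_le (Finset.union_subset h1 h2) ?_
    by_contra hlt
    have hst : σ = σ ∪ τ :=
      Finset.eq_of_subset_of_card_le Finset.subset_union_left (by omega)
    have hts : τ = σ ∪ τ :=
      Finset.eq_of_subset_of_card_le Finset.subset_union_right (by omega)
    exact h3 (hst.trans hts.symm)

/-- Each edge `σ ∼ τ` is charged to the unique face `ρ` having both `σ` and `τ` as facets. -/
lemma adjF_eq_sum (X : SC V d) {k : ℕ} {σ τ : Finset V} (hσ : σ.card = k) (hτ : τ.card = k) :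
    X.adjF k σ τ = ∑ ρ ∈ X.fc (k + 1), if σ ⊆ ρ ∧ τ ⊆ ρ ∧ σ ≠ τ then X.deg ρ else 0 := by
  have : ∀ ρ ∈ X.fc (k + 1), (if σ ⊆ ρ ∧ τ ⊆ ρ ∧ σ ≠ τ then X.deg ρ else 0)
      = if σ ∪ τ = ρ then X.deg ρ else 0 := fun ρ hρ =>
    if_congr (union_eq_iff hσ hτ (X.mem_fc.1 hρ).2).symm rfl rfl
  rw [Finset.sum_congr rfl this, Finset.sum_ite_eq, adjF]

lemma sum_adjF (X : SC V d) {k : ℕ} {σ : Finset V} (hσ : σ ∈ X.fc k) :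
    ∑ τ ∈ X.fc k, X.adjF k σ τ = k * ((d + 1 - k) * X.deg σ) := by
  have hc := (X.mem_fc.1 hσ).2
  rw [Finset.sum_congr rfl fun τ hτ => X.adjF_eq_sum hc (X.mem_fc.1 hτ).2, Finset.sum_comm,
    ← X.sum_deg_above hc, Finset.mul_sum, Finset.sum_filter]
  refine Finset.sum_congr rfl fun ρ hρ => ?_
  rw [← Finset.sum_filter, Finset.sum_const, smul_eq_mul]
  split_ifs with h
  · congr 1
    have : (X.fc k).filter (fun τ => σ ⊆ ρ ∧ τ ⊆ ρ ∧ σ ≠ τ)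
        = ((X.fc k).filter (fun τ => τ ⊆ ρ)).erase σ := by
      ext τ
      simp only [Finset.mem_filter, Finset.mem_erase, ne_eq, eq_comm (a := σ)]
      tauto
    rw [this, Finset.card_erase_of_mem (by simp [hσ, h]), X.card_facets hρ]
    simp
  · simp [h]

lemma psi_le_cut (X : SC V d) {k : ℕ} {W : Finset (Finset V)} (hW : W ⊆ X.fc k) :
    k * ∑ ρ ∈ X.psi k W, X.deg ρ ≤ ∑ σ ∈ W, ∑ τ ∈ X.fc k \ W, X.adjF k σ τ := by
  have key : ∑ σ ∈ W, ∑ τ ∈ X.fc k \ W, X.adjF k σ τ = ∑ ρ ∈ X.fc (k + 1),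
      (W.filter (fun σ => σ ⊆ ρ)).card * ((X.fc k \ W).filter (fun σ => σ ⊆ ρ)).card
        * X.deg ρ := by
    have h1 : ∀ σ ∈ W, ∑ τ ∈ X.fc k \ W, X.adjF k σ τ = ∑ ρ ∈ X.fc (k + 1),
        if σ ⊆ ρ then ((X.fc k \ W).filter (fun σ => σ ⊆ ρ)).card * X.deg ρ else 0 := by
      intro σ hσ
      rw [Finset.sum_congr rfl fun τ hτ => X.adjF_eq_sum (X.mem_fc.1 (hW hσ)).2
        (X.mem_fc.1 (Finset.mem_sdiff.1 hτ).1).2, Finset.sum_comm]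
      refine Finset.sum_congr rfl fun ρ _ => ?_
      rw [← Finset.sum_filter, Finset.sum_const, smul_eq_mul]
      split_ifs with h
      · congr 2
        refine Finset.filter_congr fun τ hτ => ?_
        have : σ ≠ τ := by
          rintro rfl
          exact (Finset.mem_sdiff.1 hτ).2 hσ
        tauto
      · simp [h]
    rw [Finset.sum_congr rfl h1, Finset.sum_comm]
    refine Finset.sum_congr rfl fun ρ _ => ?_
    rw [← Finset.sum_filter, Finset.sum_const, smul_eq_mul, mul_assoc]
  rw [key, Finset.mul_sum]
  refine le_trans (Finset.sum_le_sum fun ρ hρ => ?_)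
    (Finset.sum_le_sum_of_subset (Finset.filter_subset _ _))
  obtain ⟨hρ, ⟨σ, h1, h2, h3⟩, τ, h4, h5, h6⟩ := Finset.mem_filter.1 hρ
  refine Nat.mul_le_mul_right _ ?_
  have hτ : τ ∈ X.fc k := X.mem_fc.2 ⟨X.down_closed ρ (X.mem_fc.1 hρ).1 τ h4, h5⟩
  have ha : 0 < (W.filter (fun σ => σ ⊆ ρ)).card :=
    Finset.card_pos.2 ⟨σ, by simp [h1, h3]⟩
  have hb : 0 < ((X.fc k \ W).filter (fun σ => σ ⊆ ρ)).card :=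
    Finset.card_pos.2 ⟨τ, by simp [h4, h6, hτ]⟩
  have hab : (W.filter (fun σ => σ ⊆ ρ)).card + ((X.fc k \ W).filter (fun σ => σ ⊆ ρ)).card
      = k + 1 := by
    rw [← X.card_facets hρ, ← Finset.card_union_of_disjoint, ← Finset.filter_union,
      Finset.union_sdiff_of_subset hW]
    exact Finset.disjoint_filter_filter Finset.disjoint_sdiff
  -- `a, b ≥ 1` gives `(a - 1)(b - 1) ≥ 0`, that is `a * b ≥ a + b - 1 = k`.
  nlinarith

lemma deg_pos (X : SC V d) {σ : Finset V} (h : σ ∈ X.faces) : 0 < X.deg σ := by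
  obtain ⟨T, hT, h1, h2⟩ := X.pure σ h
  exact Finset.card_pos.2 ⟨T, Finset.mem_filter.2 ⟨X.mem_fc.2 ⟨hT, h2⟩, h1⟩⟩

lemma fc_nonempty (X : SC V d) {k : ℕ} (hk : k ≤ d + 1) : (X.fc k).Nonempty := by
  obtain ⟨T, hT, -, h2⟩ := X.pure ∅ X.empty_mem
  obtain ⟨σ, hσ, hc⟩ := Finset.exists_subset_card_eq (h2 ▸ hk)
  exact ⟨σ, X.mem_fc.2 ⟨X.down_closed T hT σ hσ, hc⟩⟩

lemma mdeg_adjG (X : SC V d) (i : ℕ) (σ : {σ // σ ∈ X.fc (i + 1)}) :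
    mdeg (X.adjG i) σ = (i + 1) * ((d - i) * X.deg σ.1) := by
  have h := X.sum_adjF σ.2
  rw [← Finset.sum_coe_sort] at h
  rw [Nat.add_sub_add_right] at h
  exact h

lemma vol_adjG (X : SC V d) {i : ℕ} (hi : i < d) (S : Finset {σ // σ ∈ X.fc (i + 1)}) :
    vol (X.adjG i) S = ((i : ℝ) + 1) * (((d : ℝ) - i) * ∑ σ ∈ S, (X.deg σ.1 : ℝ)) := by
  simp only [vol, mdeg_adjG, Finset.mul_sum]
  refine Finset.sum_congr rfl fun σ _ => ?_
  push_cast [Nat.cast_sub hi.le]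
  ring

end SC

/-- In a loopless multigraph no single vertex carries more than half of the total volume. -/
lemma vol_singleton_le {U : Type} [Fintype U] [DecidableEq U] (A : U → U → ℕ)
    (hs : ∀ u v, A u v = A v u) (hl : ∀ u, A u u = 0) (v : U) :
    vol A {v} ≤ vol A Finset.univ / 2 := by
  have h1 : mdeg A v ≤ ∑ u ∈ Finset.univ.erase v, mdeg A u := by
    have : mdeg A v = ∑ u ∈ Finset.univ.erase v, A u v := by
      rw [mdeg, ← Finset.add_sum_erase _ _ (Finset.mem_univ v), hl, zero_add]
      exact Finset.sum_congr rfl fun u _ => hs v u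
    rw [this]
    exact Finset.sum_le_sum fun u _ =>
      Finset.single_le_sum (f := fun w => A u w) (fun _ _ => Nat.zero_le _) (Finset.mem_univ v)
  have h2 := Finset.add_sum_erase Finset.univ (mdeg A) (Finset.mem_univ v)
  have h3 : (2 * mdeg A v : ℝ) ≤ ∑ u, (mdeg A u : ℝ) := by
    exact_mod_cast (by omega : 2 * mdeg A v ≤ ∑ u, mdeg A u)
  simp only [vol, Finset.sum_singleton]
  linarith

/-- **Colorful expansion bounds the conductance of all the `i`-graphs.** If `X` is a pure
`d`-dimensional `ε`-colorful expander, then for every `0 ≤ i < d` the conductance of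
`G_i(X)` satisfies `Φ(G_i(X)) ≥ ε/(i+2)`. -/
theorem statement12 {V : Type} [DecidableEq V] [Fintype V] {d : ℕ} (X : SC V d)
    (ε : ℝ) (hε : 0 < ε) (hX : X.IsColorfulExpander ε) :
    ∀ i : ℕ, i < d → ε / ((i : ℝ) + 2) ≤ conductance (X.adjG i) := by
  intro i hi
  have hdi : (0 : ℝ) < (d : ℝ) - i := sub_pos.2 (by exact_mod_cast hi)
  refine le_csInf ?_ ?_
  · obtain ⟨σ, hσ⟩ := X.fc_nonempty (k := i + 1) (by omega)
    refine ⟨_, {⟨σ, hσ⟩}, Finset.singleton_nonempty _, vol_singleton_le _ ?_ ?_ _, rfl⟩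
    · intro u v
      simp only [SC.adjG, Finset.union_comm]
    · intro u
      have := (X.mem_fc.1 u.2).2
      simp [SC.adjG, X.mem_fc, this]
  · rintro _ ⟨S, hS, hvol, rfl⟩
    set W : Finset (Finset V) := S.map (Function.Embedding.subtype _) with hWdef
    have hW : W ⊆ X.fc (i + 1) := by
      intro σ hσ
      obtain ⟨s, -, rfl⟩ := Finset.mem_map.1 hσ
      exact s.2
    have hWS : ∑ σ ∈ S, (X.deg σ.1 : ℝ) = ∑ σ ∈ W, (X.deg σ : ℝ) := by
      simp [hWdef]
    have hD : ∑ σ : {σ // σ ∈ X.fc (i + 1)}, (X.deg σ.1 : ℝ) = ∑ σ ∈ X.fc (i + 1), (X.deg σ : ℝ) :=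
      Finset.sum_coe_sort (X.fc (i + 1)) (fun σ => (X.deg σ : ℝ))
    have hcompl : Sᶜ.map (Function.Embedding.subtype _) = X.fc (i + 1) \ W := by
      ext σ
      simp only [hWdef, Finset.mem_map, Finset.mem_compl, Finset.mem_sdiff,
        Function.Embedding.coe_subtype, Subtype.exists, exists_and_right, exists_eq_right]
      constructor
      · rintro ⟨h, h'⟩
        exact ⟨h, fun ⟨_, h2⟩ => h' h2⟩
      · rintro ⟨h, h'⟩
        exact ⟨h, fun h2 => h' ⟨h, h2⟩⟩
    have hcut : cutEdges (X.adjG i) S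
        = ((∑ σ ∈ W, ∑ τ ∈ X.fc (i + 1) \ W, X.adjF (i + 1) σ τ : ℕ) : ℝ) := by
      rw [← hcompl]
      simp only [hWdef, Finset.sum_map, cutEdges]
      push_cast
      rfl
    have hpc : ((i : ℝ) + 1) * ∑ ρ ∈ X.psi (i + 1) W, (X.deg ρ : ℝ) ≤ cutEdges (X.adjG i) S := by
      rw [hcut]
      exact_mod_cast X.psi_le_cut hW
    have hsucc : ((i : ℝ) + 2) * ∑ ρ ∈ X.fc (i + 2), (X.deg ρ : ℝ)
        = ((d : ℝ) - i) * ∑ σ ∈ X.fc (i + 1), (X.deg σ : ℝ) := by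
      rw [← Nat.cast_sub hi.le]
      have h := X.sum_deg_succ (i + 1)
      rw [Nat.add_sub_add_right] at h
      exact_mod_cast h
    have hpos : ∀ {F : Finset (Finset V)} {k : ℕ}, F ⊆ X.fc k → F.Nonempty →
        0 < ∑ σ ∈ F, (X.deg σ : ℝ) := fun hF hne =>
      Finset.sum_pos (fun σ hσ => by exact_mod_cast X.deg_pos (X.mem_fc.1 (hF hσ)).1) hne
    have hWpos := hpos hW (hS.map)
    have hDpos := hpos (Finset.Subset.refl (X.fc (i + 1))) (X.fc_nonempty (by omega))
    have hQpos := hpos (Finset.Subset.refl (X.fc (i + 2))) (X.fc_nonempty (by omega))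
    have hnorm : ∀ {F : Finset (Finset V)} {k : ℕ}, F ⊆ X.fc k →
        X.norm k F = (∑ σ ∈ F, (X.deg σ : ℝ)) / ∑ σ ∈ X.fc k, (X.deg σ : ℝ) := by
      intro F k hF
      rw [SC.norm, Finset.filter_mem_eq_inter, Finset.inter_eq_right.2 hF]
    have hexp := hX i hi W hW
    rw [hnorm hW, hnorm (F := X.psi (i + 1) W) (Finset.filter_subset _ _)] at hexp
    rw [X.vol_adjG hi, X.vol_adjG hi, hWS, hD] at hvol
    rw [X.vol_adjG hi, hWS]
    generalize ∑ σ ∈ W, (X.deg σ : ℝ) = w at *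
    generalize ∑ σ ∈ X.fc (i + 1), (X.deg σ : ℝ) = D at *
    generalize ∑ σ ∈ X.fc (i + 2), (X.deg σ : ℝ) = Q at *
    generalize ∑ σ ∈ X.psi (i + 1) W, (X.deg σ : ℝ) = P at *
    generalize cutEdges (X.adjG i) S = C at *
    have hi0 : (0 : ℝ) ≤ i := Nat.cast_nonneg i
    have hwD : w ≤ D / 2 := by
      have hc : (0 : ℝ) < (i + 1) * (d - i) := by positivity
      refine le_of_mul_le_mul_left ?_ hc
      linarith
    have hexpand := hexp (by positivity) (by rw [div_le_iff₀ hDpos]; linarith)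
    rw [le_div_iff₀ (by positivity), le_div_iff₀ hQpos] at hexpand
    -- Eliminating the normalizing sums through `(i + 2) Q = (d - i) D`.
    have hmain : ε * (w * (d - i)) ≤ P * (i + 2) := by
      have : ε * (w / D) * Q * (i + 2) = ε * (w * (d - i)) := by
        rw [mul_assoc (ε * (w / D)), mul_comm Q, hsucc]
        field_simp
      rw [← this]
      exact mul_le_mul_of_nonneg_right hexpand (by positivity)
    rw [div_le_div_iff₀ (by positivity) (by positivity)]
    calc ε * ((i + 1) * ((d - i) * w)) = (i + 1) * (ε * (w * (d - i))) := by ring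
      _ ≤ (i + 1) * (P * (i + 2)) := mul_le_mul_of_nonneg_left hmain (by positivity)
      _ = ((i + 1) * P) * (i + 2) := by ring
      _ ≤ C * (i + 2) := mul_le_mul_of_nonneg_right hpc (by positivity)
end

section
/- Let G = (V,E) be a finite undirected multigraph (multiple edges allowed) with all degrees positive, normalized adjacency matrix Ã, and eigenvalues λ1 ≥ λ2 ≥ … ≥ λ_{|V|} of Ã. Then λ2 ≤ 1 − Φ(G)²/2. -/
/-!
The hard direction of Cheeger's inequality, through Rayleigh quotients.

By Courant–Fischer there is a nonzero `f` with `∑ d f = 0` whose energy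
`∑∑ A(u,v) (f u - f v)²` is at most `2 (1 - λ₂) ∑ d f²`
(`exists_rayleigh_vector`, `exists_low_energy`). Subtract from `f` a volume median `c`
(`exists_median`): the energy is unchanged, `∑ d f²` does not decrease because `∑ d f = 0`, and
the positive and the negative part of `f - c` are both supported on sets of volume at most half
the total.

For `w ≥ 0` with such a support, slicing `w` into level sets gives
`2 Φ ∑ d w ≤ ∑∑ A(u,v) |w u - w v|` (`coarea`). Taking `w = h²` and using
`Φ |x² - y²| ≤ (x - y)² + Φ²/4 (x + y)²` yields `Φ² ∑ d h² ≤ ∑∑ A(u,v) (h u - h v)²`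
(`cheeger_half`). Applying this to both parts of `f - c` and adding up, `Φ² ≤ 2 (1 - λ₂)`.
-/


open Finset

open scoped Classical

/-! ### Volume, cuts and conductance -/

section Cheeger

variable {U : Type} [Fintype U] {A : U → U → ℕ}

lemma vol_mono (A : U → U → ℕ) {S T : Finset U} (h : S ⊆ T) : vol A S ≤ vol A T :=
  Finset.sum_le_sum_of_subset_of_nonneg h fun _ _ _ => Nat.cast_nonneg _

lemma vol_nonneg (A : U → U → ℕ) (S : Finset U) : 0 ≤ vol A S :=
  Finset.sum_nonneg fun _ _ => Nat.cast_nonneg _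

lemma vol_pos (hdeg : ∀ v, 0 < mdeg A v) {S : Finset U} (hS : S.Nonempty) : 0 < vol A S :=
  Finset.sum_pos (fun v _ => Nat.cast_pos.2 (hdeg v)) hS

lemma sum_deg_left (A : U → U → ℕ) (g : U → ℝ) :
    ∑ u, ∑ v, (A u v : ℝ) * g u = ∑ u, (mdeg A u : ℝ) * g u := by
  simp [mdeg, Finset.sum_mul]

lemma sum_deg_right (hsym : ∀ u v, A u v = A v u) (g : U → ℝ) :
    ∑ u, ∑ v, (A u v : ℝ) * g v = ∑ u, (mdeg A u : ℝ) * g u := by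
  rw [Finset.sum_comm, ← sum_deg_left]
  simp_rw [fun u v => hsym v u]

lemma energy_eq (hsym : ∀ u v, A u v = A v u) (f : U → ℝ) :
    ∑ u, ∑ v, (A u v : ℝ) * (f u - f v) ^ 2 =
      2 * ∑ v, (mdeg A v : ℝ) * f v ^ 2 - 2 * ∑ u, ∑ v, (A u v : ℝ) * (f u * f v) := by
  have h : ∀ u v, (A u v : ℝ) * (f u - f v) ^ 2 =
      (A u v : ℝ) * f u ^ 2 + (A u v : ℝ) * f v ^ 2 - 2 * ((A u v : ℝ) * (f u * f v)) := by
    intro u v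
    ring
  simp_rw [h, Finset.sum_sub_distrib, Finset.sum_add_distrib, ← Finset.mul_sum]
  rw [sum_deg_left A (fun u => f u ^ 2), sum_deg_right hsym (fun u => f u ^ 2)]
  ring

variable [DecidableEq U]

lemma cutEdges_nonneg (A : U → U → ℕ) (S : Finset U) : 0 ≤ cutEdges A S :=
  Finset.sum_nonneg fun _ _ => Finset.sum_nonneg fun _ _ => Nat.cast_nonneg _

lemma conductance_nonneg (A : U → U → ℕ) : 0 ≤ conductance A := by
  apply Real.sInf_nonneg
  rintro x ⟨S, -, -, rfl⟩
  exact div_nonneg (cutEdges_nonneg A S) (vol_nonneg A S)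

lemma conductance_mul_vol_le (hdeg : ∀ v, 0 < mdeg A v) {S : Finset U} (hS : S.Nonempty)
    (hvol : vol A S ≤ vol A Finset.univ / 2) : conductance A * vol A S ≤ cutEdges A S := by
  rw [← le_div_iff₀ (vol_pos hdeg hS)]
  refine csInf_le ⟨0, ?_⟩ ⟨S, hS, hvol, rfl⟩
  rintro x ⟨T, -, -, rfl⟩
  exact div_nonneg (cutEdges_nonneg A T) (vol_nonneg A T)

/-- The cut counted over ordered pairs, each edge twice. -/
lemma two_mul_cutEdges (hsym : ∀ u v, A u v = A v u) (S : Finset U) :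
    2 * cutEdges A S = ∑ u, ∑ v, (A u v : ℝ) * (if (u ∈ S ↔ v ∈ S) then 0 else 1) := by
  have h1 : cutEdges A S = ∑ u, ∑ v, (A u v : ℝ) * (if u ∈ S ∧ v ∉ S then 1 else 0) := by
    unfold cutEdges
    rw [← Finset.sum_subset (Finset.subset_univ S)]
    · refine Finset.sum_congr rfl fun u hu => ?_
      rw [← Finset.sum_subset (Finset.subset_univ Sᶜ)]
      · refine Finset.sum_congr rfl fun v hv => ?_
        simp [hu, Finset.mem_compl.1 hv]
      · intro v _ hv
        simp_all
    · intro u _ hu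
      simp [hu]
  have h2 : cutEdges A S = ∑ u, ∑ v, (A u v : ℝ) * (if v ∈ S ∧ u ∉ S then 1 else 0) := by
    rw [h1, Finset.sum_comm]
    simp_rw [fun u v => hsym v u]
  rw [two_mul]
  nth_rewrite 1 [h1]
  rw [h2]
  simp_rw [← Finset.sum_add_distrib, ← mul_add]
  refine Finset.sum_congr rfl fun u _ => Finset.sum_congr rfl fun v _ => ?_
  by_cases hu : u ∈ S <;> by_cases hv : v ∈ S <;> simp [hu, hv]

/-! ### Sweep cuts and the half-volume estimate -/

/-- Discrete co-area inequality, by induction on the size of the support: subtracting the least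
positive value `m` on the support `S` removes `2 m Φ vol S` from the left side and
`2 m |E(S, Sᶜ)|` from the right side. -/
lemma coarea (hsym : ∀ u v, A u v = A v u) (hdeg : ∀ v, 0 < mdeg A v) (n : ℕ) :
    ∀ w : U → ℝ, (∀ v, 0 ≤ w v) → vol A {v | w v ≠ 0} ≤ vol A Finset.univ / 2 →
      Finset.card {v | w v ≠ 0} ≤ n →
      2 * conductance A * ∑ v, (mdeg A v : ℝ) * w v ≤ ∑ u, ∑ v, (A u v : ℝ) * |w u - w v| := by
  induction n with
  | zero =>
    intro w _ _ hc
    have h0 : ∀ v, w v = 0 := by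
      intro v
      by_contra hv
      have : v ∈ ({v | w v ≠ 0} : Finset U) := by simp [hv]
      rw [Finset.card_eq_zero.1 (Nat.le_zero.1 hc)] at this
      simp at this
    simp [h0]
  | succ n ih =>
    intro w hw hvol hc
    set S : Finset U := {v | w v ≠ 0} with hS
    have memS : ∀ v, v ∈ S ↔ w v ≠ 0 := by simp [hS]
    rcases S.eq_empty_or_nonempty with hE | hne
    · have h0 : ∀ v, w v = 0 := by
        intro v
        by_contra hv
        have := (memS v).2 hv
        simp [hE] at this
      simp [h0]
    obtain ⟨z, hz, hmin⟩ := S.exists_min_image w hne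
    set m := w z with hm
    let w' : U → ℝ := fun v => if v ∈ S then w v - m else 0
    have hw'S : ∀ v ∈ S, w v = w' v + m := by
      intro v hv
      simp [w', hv]
    have hw'N : ∀ v, v ∉ S → w v = 0 ∧ w' v = 0 := by
      intro v hv
      exact ⟨by simpa [memS] using hv, by simp [w', hv]⟩
    have hw' : ∀ v, 0 ≤ w' v := by
      intro v
      by_cases hv : v ∈ S
      · linarith [hw'S v hv, hmin v hv]
      · exact (hw'N v hv).2.ge
    have hsub : ({v | w' v ≠ 0} : Finset U) ⊆ S.erase z := by
      intro v hv
      have hv' : w' v ≠ 0 := by simpa using hv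
      have hvS : v ∈ S := by
        by_contra h
        exact hv' (hw'N v h).2
      refine Finset.mem_erase.2 ⟨?_, hvS⟩
      rintro rfl
      exact hv' (by linarith [hw'S v hvS])
    have hcard : Finset.card {v | w' v ≠ 0} ≤ n := by
      have h1 := Finset.card_le_card hsub
      rw [Finset.card_erase_of_mem hz] at h1
      omega
    have key := ih w' hw' ((vol_mono A (hsub.trans (Finset.erase_subset _ _))).trans hvol) hcard
    have hcut := conductance_mul_vol_le hdeg hne hvol
    have e1 : ∑ v, (mdeg A v : ℝ) * w v = ∑ v, (mdeg A v : ℝ) * w' v + m * vol A S := by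
      have : m * vol A S = ∑ v, (mdeg A v : ℝ) * (if v ∈ S then m else 0) := by
        simp [vol, Finset.mul_sum, mul_comm]
      rw [this, ← Finset.sum_add_distrib]
      refine Finset.sum_congr rfl fun v _ => ?_
      by_cases hv : v ∈ S
      · simp only [hv, if_true, hw'S v hv]; ring
      · simp [hv, hw'N v hv]
    have e2 : ∑ u, ∑ v, (A u v : ℝ) * |w u - w v| =
        ∑ u, ∑ v, (A u v : ℝ) * |w' u - w' v| + m * (2 * cutEdges A S) := by
      rw [two_mul_cutEdges hsym, Finset.mul_sum, ← Finset.sum_add_distrib]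
      refine Finset.sum_congr rfl fun u _ => ?_
      rw [Finset.mul_sum, ← Finset.sum_add_distrib]
      refine Finset.sum_congr rfl fun v _ => ?_
      have hm0 : 0 ≤ m := hw z
      by_cases hu : u ∈ S <;> by_cases hv : v ∈ S
      · simp [hu, hv, hw'S u hu, hw'S v hv]
      · have := hw' u
        simp only [hu, hv, hw'S u hu, hw'N v hv, sub_zero, iff_false, not_true, if_false]
        rw [abs_of_nonneg this, abs_of_nonneg (by linarith)]
        ring
      · have := hw' v
        simp only [hu, hv, hw'S v hv, hw'N u hu, zero_sub, abs_neg, iff_true, if_false]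
        rw [abs_of_nonneg this, abs_of_nonneg (by linarith)]
        ring
      · simp [hu, hv, hw'N u hu, hw'N v hv]
    rw [e1, e2]
    have := mul_le_mul_of_nonneg_left hcut (hw z)
    rw [← hm] at this
    nlinarith

/-- The Cheeger estimate for nonnegative functions supported on at most half of the volume. -/
lemma cheeger_half (hsym : ∀ u v, A u v = A v u) (hdeg : ∀ v, 0 < mdeg A v)
    (h : U → ℝ) (hh : ∀ v, 0 ≤ h v) (hvol : vol A {v | h v ≠ 0} ≤ vol A Finset.univ / 2) :
    conductance A ^ 2 * ∑ v, (mdeg A v : ℝ) * h v ^ 2 ≤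
      ∑ u, ∑ v, (A u v : ℝ) * (h u - h v) ^ 2 := by
  set φ := conductance A with hφ
  have hφ0 : 0 ≤ φ := conductance_nonneg A
  have h1 := coarea hsym hdeg _ (fun v => h v ^ 2) (fun v => sq_nonneg _)
    (by simpa using hvol) le_rfl
  have h2 : φ * ∑ u, ∑ v, (A u v : ℝ) * |h u ^ 2 - h v ^ 2| ≤
      ∑ u, ∑ v, ((A u v : ℝ) * (h u - h v) ^ 2 +
        φ ^ 2 / 2 * ((A u v : ℝ) * h u ^ 2 + (A u v : ℝ) * h v ^ 2)) := by
    rw [Finset.mul_sum]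
    refine Finset.sum_le_sum fun u _ => ?_
    rw [Finset.mul_sum]
    refine Finset.sum_le_sum fun v _ => ?_
    have hpt : φ * |h u ^ 2 - h v ^ 2| ≤
        (h u - h v) ^ 2 + φ ^ 2 / 2 * (h u ^ 2 + h v ^ 2) := by
      -- AM-GM on `|x - y|` and `φ (x + y) / 2`, then `(x + y)² ≤ 2 x² + 2 y²`
      have hA : |h u ^ 2 - h v ^ 2| = |h u - h v| * (h u + h v) := by
        rw [sq_sub_sq, abs_mul, abs_of_nonneg (add_nonneg (hh u) (hh v)), mul_comm]
      rw [hA, ← sq_abs (h u - h v)]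
      nlinarith [sq_nonneg (|h u - h v| - φ / 2 * (h u + h v)), sq_nonneg (φ * (h u - h v))]
    calc φ * ((A u v : ℝ) * |h u ^ 2 - h v ^ 2|)
        = (A u v : ℝ) * (φ * |h u ^ 2 - h v ^ 2|) := by ring
      _ ≤ (A u v : ℝ) * ((h u - h v) ^ 2 + φ ^ 2 / 2 * (h u ^ 2 + h v ^ 2)) :=
          mul_le_mul_of_nonneg_left hpt (Nat.cast_nonneg _)
      _ = _ := by ring
  simp_rw [Finset.sum_add_distrib, ← Finset.mul_sum, Finset.sum_add_distrib] at h2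
  rw [sum_deg_left A (fun u => h u ^ 2), sum_deg_right hsym (fun u => h u ^ 2)] at h2
  have h3 := mul_le_mul_of_nonneg_left h1 hφ0
  nlinarith

/-! ### Medians -/

/-- A volume median of `f`. -/
lemma exists_median [Nonempty U] (A : U → U → ℕ) (f : U → ℝ) :
    ∃ c, vol A {v | c < f v} ≤ vol A Finset.univ / 2 ∧
      vol A {v | f v < c} ≤ vol A Finset.univ / 2 := by
  obtain ⟨t, -, ht⟩ := Finset.exists_max_image Finset.univ f Finset.univ_nonempty
  let T : Finset U := {x | vol A {v | f x < f v} ≤ vol A Finset.univ / 2}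
  have hT : T.Nonempty := by
    refine ⟨t, ?_⟩
    have : ({v | f t < f v} : Finset U) = ∅ := by
      ext v
      simpa using ht v (Finset.mem_univ v)
    have h0 := vol_nonneg A Finset.univ
    simp only [T, Finset.mem_filter, Finset.mem_univ, true_and, this]
    simp only [vol, Finset.sum_empty] at *
    linarith
  obtain ⟨x, hx, hmin⟩ := T.exists_min_image f hT
  refine ⟨f x, by simpa [T] using hx, ?_⟩
  rcases Finset.eq_empty_or_nonempty ({v | f v < f x} : Finset U) with hE | hne
  · have h0 := vol_nonneg A Finset.univ
    rw [hE]
    simp only [vol, Finset.sum_empty] at *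
    linarith
  -- `y` is the next smaller value, so `{f < f x}` is the complement of `{f y < f}`
  obtain ⟨y, hy, hmax⟩ := Finset.exists_max_image _ f hne
  have hyx : f y < f x := by simpa using hy
  have hyT : y ∉ T := fun h => (hmin y h).not_gt hyx
  have hbig : vol A Finset.univ / 2 < vol A {v | f y < f v} := by simpa [T] using hyT
  have hdisj : Disjoint ({v | f v < f x} : Finset U) ({v | f y < f v} : Finset U) := by
    rw [Finset.disjoint_left]
    intro v hv hv'
    have := hmax v hv
    rw [Finset.mem_filter] at hv'
    linarith [hv'.2]
  have hsum : vol A {v | f v < f x} + vol A {v | f y < f v} ≤ vol A Finset.univ := by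
    have := vol_mono A (Finset.subset_univ
      (({v | f v < f x} : Finset U) ∪ ({v | f y < f v} : Finset U)))
    unfold vol at this ⊢
    rwa [Finset.sum_union hdisj] at this
  linarith

/-! ### The spectral side -/

/-- Easy half of Courant–Fischer for the second eigenvalue: the span of the top two eigenvectors
meets the hyperplane orthogonal to `s`. -/
lemma exists_rayleigh_vector {M : Matrix U U ℝ} (hM : M.IsHermitian) (hU : 1 < Fintype.card U)
    (lam : Fin (Fintype.card U) → ℝ) (hmono : Antitone lam)
    (hchar : M.charpoly = ∏ k, (Polynomial.X - Polynomial.C (lam k))) (s : U → ℝ) :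
    ∃ y : U → ℝ, 0 < y ⬝ᵥ y ∧ s ⬝ᵥ y = 0 ∧ lam ⟨1, hU⟩ * (y ⬝ᵥ y) ≤ y ⬝ᵥ (M.mulVec y) := by
  have hroots : M.charpoly.roots = Multiset.map lam Finset.univ.val := by
    rw [hchar, Polynomial.roots_prod]
    · simp
    · simp [Finset.prod_ne_zero_iff, Polynomial.X_sub_C_ne_zero]
  have heig : hM.eigenvalues₀ = lam := by
    rw [hM.roots_charpoly_eq_eigenvalues₀, Fin.univ_val_map, Fin.univ_val_map,
      Multiset.coe_eq_coe] at hroots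
    exact List.ofFn_injective
      (hroots.eq_of_sortedGE hM.eigenvalues₀_antitone.sortedGE_ofFn hmono.sortedGE_ofFn)
  let e : Fin (Fintype.card U) ≃ U := Fintype.equivOfCardEq (Fintype.card_fin _)
  have hev : ∀ k, hM.eigenvalues (e k) = lam k := by
    intro k
    simp [Matrix.IsHermitian.eigenvalues, e, heig]
  let b : Fin (Fintype.card U) → U → ℝ := fun k => ⇑(hM.eigenvectorBasis (e k))
  have hb : ∀ k, M.mulVec (b k) = lam k • b k := by
    intro k
    rw [← hev]
    exact hM.mulVec_eigenvectorBasis (e k)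
  have horth : ∀ k l, b k ⬝ᵥ b l = if k = l then 1 else 0 := by
    intro k l
    have := orthonormal_iff_ite.1 hM.eigenvectorBasis.orthonormal (e l) (e k)
    rw [EuclideanSpace.inner_eq_star_dotProduct] at this
    simpa [b, eq_comm] using this
  let i0 : Fin (Fintype.card U) := ⟨0, by omega⟩
  let i1 : Fin (Fintype.card U) := ⟨1, hU⟩
  have h01 : i0 ≠ i1 := by simp [i0, i1]
  have hle : lam i1 ≤ lam i0 := hmono (by simp [i0, i1])
  have hcomb : ∀ p q : ℝ, (p • b i0 + q • b i1) ⬝ᵥ (p • b i0 + q • b i1) = p ^ 2 + q ^ 2 ∧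
      (p • b i0 + q • b i1) ⬝ᵥ (M.mulVec (p • b i0 + q • b i1)) =
        p ^ 2 * lam i0 + q ^ 2 * lam i1 := by
    intro p q
    simp only [Matrix.mulVec_add, Matrix.mulVec_smul, hb, add_dotProduct, dotProduct_add,
      smul_dotProduct, dotProduct_smul, horth, if_neg h01, if_neg h01.symm, if_true, smul_eq_mul]
    constructor <;> ring
  have hfin : ∀ p q : ℝ, 0 < p ^ 2 + q ^ 2 → p * (s ⬝ᵥ b i0) + q * (s ⬝ᵥ b i1) = 0 →
      ∃ y : U → ℝ, 0 < y ⬝ᵥ y ∧ s ⬝ᵥ y = 0 ∧ lam i1 * (y ⬝ᵥ y) ≤ y ⬝ᵥ (M.mulVec y) := by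
    intro p q hpq hs
    refine ⟨p • b i0 + q • b i1, by rwa [(hcomb p q).1], ?_, ?_⟩
    · simpa [dotProduct_add, dotProduct_smul] using hs
    · rw [(hcomb p q).1, (hcomb p q).2]
      nlinarith [mul_le_mul_of_nonneg_left hle (sq_nonneg p)]
  by_cases hz : s ⬝ᵥ b i1 = 0
  · exact hfin 0 1 (by norm_num) (by simp [hz])
  · exact hfin (s ⬝ᵥ b i1) (-(s ⬝ᵥ b i0)) (by positivity) (by ring)

/-- The Rayleigh bound transported by `f v = y v / √(deg v)`. -/
lemma exists_low_energy (hsym : ∀ u v, A u v = A v u) (hdeg : ∀ v, 0 < mdeg A v)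
    (hU : 1 < Fintype.card U) (lam : Fin (Fintype.card U) → ℝ) (hmono : Antitone lam)
    (hchar : (normAdj A).charpoly = ∏ k, (Polynomial.X - Polynomial.C (lam k))) :
    ∃ f : U → ℝ, 0 < ∑ v, (mdeg A v : ℝ) * f v ^ 2 ∧ ∑ v, (mdeg A v : ℝ) * f v = 0 ∧
      ∑ u, ∑ v, (A u v : ℝ) * (f u - f v) ^ 2 ≤
        2 * (1 - lam ⟨1, hU⟩) * ∑ v, (mdeg A v : ℝ) * f v ^ 2 := by
  have hM : (normAdj A).IsHermitian := by
    ext u v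
    simp [normAdj, hsym u v, mul_comm]
  obtain ⟨y, hy, hs, hR⟩ := exists_rayleigh_vector hM hU lam hmono hchar
    (fun v => Real.sqrt (mdeg A v))
  have hpos : ∀ v, 0 < Real.sqrt (mdeg A v) := fun v => Real.sqrt_pos.2 (Nat.cast_pos.2 (hdeg v))
  have hsq : ∀ v, (mdeg A v : ℝ) = Real.sqrt (mdeg A v) ^ 2 := fun v =>
    (Real.sq_sqrt (Nat.cast_nonneg _)).symm
  have e1 : ∑ v, (mdeg A v : ℝ) * (y v / Real.sqrt (mdeg A v)) ^ 2 = y ⬝ᵥ y := by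
    refine Finset.sum_congr rfl fun v _ => ?_
    have := (hpos v).ne'
    nth_rewrite 1 [hsq v]
    field_simp
  have e2 : ∑ u, ∑ v, (A u v : ℝ) * (y u / Real.sqrt (mdeg A u) * (y v / Real.sqrt (mdeg A v))) =
      y ⬝ᵥ ((normAdj A).mulVec y) := by
    simp only [dotProduct, Matrix.mulVec, Finset.mul_sum, normAdj, Matrix.of_apply]
    refine Finset.sum_congr rfl fun u _ => Finset.sum_congr rfl fun v _ => ?_
    have := (hpos v).ne'
    have := (hpos u).ne'
    field_simp
  refine ⟨fun v => y v / Real.sqrt (mdeg A v), by rwa [e1], ?_, ?_⟩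
  · rw [← hs]
    refine Finset.sum_congr rfl fun v _ => ?_
    have := (hpos v).ne'
    nth_rewrite 1 [hsq v]
    field_simp
  · rw [energy_eq hsym, e1, e2]
    linarith

end Cheeger

/-! ### Combining both parts of `f - c` -/

/-- **Cheeger inequality (Sinclair–Jerrum).** For a finite multigraph with positive
degrees and sorted eigenvalues `λ1 ≥ … ≥ λ_{|V|}` of its normalized adjacency matrix,
`λ2 ≤ 1 − Φ(G)²/2`. -/
theorem statement16 {U : Type} [Fintype U] [DecidableEq U] (A : U → U → ℕ)
    (hsym : ∀ u v, A u v = A v u) (hdeg : ∀ v, 0 < mdeg A v)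
    (hU : 1 < Fintype.card U)
    (lam : Fin (Fintype.card U) → ℝ) (hmono : Antitone lam)
    (hchar : (normAdj A).charpoly = ∏ k, (Polynomial.X - Polynomial.C (lam k))) :
    lam ⟨1, hU⟩ ≤ 1 - conductance A ^ 2 / 2 := by
  have : Nonempty U := Fintype.card_pos_iff.1 (by omega)
  obtain ⟨f, hpos, hzero, hE⟩ := exists_low_energy hsym hdeg hU lam hmono hchar
  obtain ⟨c, hc1, hc2⟩ := exists_median A f
  have hp := cheeger_half hsym hdeg (fun v => max (f v - c) 0) (fun v => le_max_right _ _)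
    (le_trans (vol_mono A fun v hv => by simpa using hv) hc1)
  have hn := cheeger_half hsym hdeg (fun v => max (c - f v) 0) (fun v => le_max_right _ _)
    (le_trans (vol_mono A fun v hv => by simpa using hv) hc2)
  have hsplit : ∑ u, ∑ v, (A u v : ℝ) * (max (f u - c) 0 - max (f v - c) 0) ^ 2 +
      ∑ u, ∑ v, (A u v : ℝ) * (max (c - f u) 0 - max (c - f v) 0) ^ 2 ≤
      ∑ u, ∑ v, (A u v : ℝ) * (f u - f v) ^ 2 := by
    simp_rw [← Finset.sum_add_distrib, ← mul_add]
    refine Finset.sum_le_sum fun u _ => Finset.sum_le_sum fun v _ =>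
      mul_le_mul_of_nonneg_left ?_ (Nat.cast_nonneg _)
    rcases le_total (f u) c with hu | hu <;> rcases le_total (f v) c with hv | hv <;>
      simp only [max_eq_left, max_eq_right, sub_nonneg, sub_nonpos, hu, hv] <;>
      nlinarith [mul_nonneg (sub_nonneg.2 hu) (sub_nonneg.2 hv)]
  -- `∑ d (f - c)² = ∑ d f² + c² vol V`, since `∑ d f = 0`
  have hmass : ∑ v, (mdeg A v : ℝ) * f v ^ 2 ≤
      ∑ v, (mdeg A v : ℝ) * max (f v - c) 0 ^ 2 + ∑ v, (mdeg A v : ℝ) * max (c - f v) 0 ^ 2 := by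
    have h1 : ∀ v, (mdeg A v : ℝ) * max (f v - c) 0 ^ 2 + (mdeg A v : ℝ) * max (c - f v) 0 ^ 2 =
        (mdeg A v : ℝ) * f v ^ 2 - 2 * c * ((mdeg A v : ℝ) * f v) + c ^ 2 * (mdeg A v : ℝ) := by
      intro v
      rcases le_total (f v) c with hv | hv <;>
        simp only [max_eq_left, max_eq_right, sub_nonneg, sub_nonpos, hv] <;> ring
    simp_rw [← Finset.sum_add_distrib, h1, Finset.sum_add_distrib, Finset.sum_sub_distrib,
      ← Finset.mul_sum, hzero]
    have := mul_nonneg (sq_nonneg c) (vol_nonneg A Finset.univ)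
    unfold vol at this
    linarith
  have hm := mul_le_mul_of_nonneg_left hmass (sq_nonneg (conductance A))
  have hfinal : conductance A ^ 2 * ∑ v, (mdeg A v : ℝ) * f v ^ 2 ≤
      2 * (1 - lam ⟨1, hU⟩) * ∑ v, (mdeg A v : ℝ) * f v ^ 2 := by
    linarith
  have := le_of_mul_le_mul_right hfinal hpos
  linarith
end

section
/- Let G = (V,E) be a finite undirected multigraph (multiple edges allowed) with all degrees positive, normalized adjacency matrix Ã, and eigenvalues λ1 ≥ λ2 ≥ … ≥ λ_{|V|} of Ã. Then λ_{|V|} ≥ −1 + β(G)²/2. -/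
/-! Trevisan's rounding argument. An eigenvector of the normalized adjacency matrix for the
eigenvalue `l`, rescaled by `D^(1/2)` with `D = diag(1/deg)`, is a nonzero `x` with
`A x = l (deg · x)`, so that
`½ ∑ A(u,v) (x u + x v)² = (1 + l) P` where `P = ∑ deg(v) x(v)²`. For each level `t ≥ 0` take
`S1`, `S2` to be the vertices with `t < x(v)²` and `x(v) > 0`, resp. `x(v) < 0`. The definition
of `β` gives `β vol(S1 ∪ S2) ≤ |E(S, S̄)| + 2(|E(S1)| + |E(S2)|)` at every level, and integrating
over `t` gives (`rounding`) `β P ≤ ½ ∑ A(u,v) |x u + x v| (|x u| + |x v|)`. By Cauchy–Schwarz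
the right side is at most `√((1 + l) P · 2P)`, whence `β² ≤ 2 (1 + l)`.

The bound holds with loops as well: a loop at `v` counts once in `deg v` and twice in the numerator
of `β`, which over all levels integrates to `2 x(v)²`, exactly the diagonal term
`½ |2 x(v)| · 2 |x(v)|`. -/

open Finset

open scoped Classical

/-! ### Integration over levels -/

/-- Layer-cake principle: an inequality between linear combinations of the threshold
indicators `t ↦ 1[t < a i]`, valid at every level `t ≥ 0`, integrates to the same inequality
between the thresholds. -/
lemma layer_cake {ι : Type*} [Fintype ι] (c a : ι → ℝ) (ha : ∀ i, 0 ≤ a i)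
    (h : ∀ t : ℝ, 0 ≤ t → 0 ≤ ∑ i, c i * (Set.Iio (a i)).indicator 1 t) :
    0 ≤ ∑ i, c i * a i := by
  set M := ∑ i, a i with hM
  have hint : ∀ i, MeasureTheory.IntegrableOn ((Set.Iio (a i)).indicator (1 : ℝ → ℝ))
      (Set.Ico 0 M) := by
    intro i
    apply MeasureTheory.Integrable.indicator _ measurableSet_Iio
    exact MeasureTheory.integrable_const (1 : ℝ)
  have hval : ∀ i, ∫ t in Set.Ico 0 M, (Set.Iio (a i)).indicator (1 : ℝ → ℝ) t = a i := by
    intro i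
    have haM : a i ≤ M := Finset.single_le_sum (fun j _ => ha j) (Finset.mem_univ i)
    rw [MeasureTheory.integral_indicator_one measurableSet_Iio,
      MeasureTheory.measureReal_restrict_apply measurableSet_Iio]
    have : Set.Iio (a i) ∩ Set.Ico 0 M = Set.Ico 0 (a i) := by
      ext t
      simp only [Set.mem_inter_iff, Set.mem_Iio, Set.mem_Ico]
      constructor
      · rintro ⟨h1, h2, _⟩
        exact ⟨h2, h1⟩
      · rintro ⟨h1, h2⟩
        exact ⟨h2, h1, lt_of_lt_of_le h2 haM⟩
    rw [this, Real.volume_real_Ico_of_le (ha i), sub_zero]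
  have key : ∫ t in Set.Ico 0 M, ∑ i, c i * (Set.Iio (a i)).indicator (1 : ℝ → ℝ) t
      = ∑ i, c i * a i := by
    rw [MeasureTheory.integral_finsetSum _ (fun i _ => (hint i).const_mul (c i))]
    refine Finset.sum_congr rfl fun i _ => ?_
    rw [MeasureTheory.integral_const_mul, hval]
  rw [← key]
  exact MeasureTheory.setIntegral_nonneg measurableSet_Ico fun t ht => h t ht.1

/-! ### Elementary bounds on the bipartiteness ratio -/

lemma vol_pos_of_nonempty {U : Type} [Fintype U] (A : U → U → ℕ) (hdeg : ∀ v, 0 < mdeg A v)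
    {S : Finset U} (hS : S.Nonempty) : 0 < vol A S :=
  Finset.sum_pos (fun v _ => by exact_mod_cast hdeg v) hS

lemma bipRatio_terms_nonneg {U : Type} [Fintype U] [DecidableEq U] (A : U → U → ℕ)
    (S1 S2 : Finset U) :
    0 ≤ (cutEdges A (S1 ∪ S2) + 2 * (edgesWithin A S1 + edgesWithin A S2)) /
      vol A (S1 ∪ S2) := by
  unfold cutEdges edgesWithin vol
  positivity

lemma bipRatio_nonneg {U : Type} [Fintype U] [DecidableEq U] (A : U → U → ℕ) :
    0 ≤ bipRatio A := by
  apply Real.sInf_nonneg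
  rintro x ⟨S1, S2, _, _, rfl⟩
  exact bipRatio_terms_nonneg A S1 S2

/-- The inequality defining `β`, cleared of denominators; the empty pair is allowed here, both
sides being `0`. -/
lemma bipRatio_mul_vol_le {U : Type} [Fintype U] [DecidableEq U] (A : U → U → ℕ)
    (hdeg : ∀ v, 0 < mdeg A v) (S1 S2 : Finset U) (hd : Disjoint S1 S2) :
    bipRatio A * vol A (S1 ∪ S2) ≤
      cutEdges A (S1 ∪ S2) + 2 * (edgesWithin A S1 + edgesWithin A S2) := by
  rcases (S1 ∪ S2).eq_empty_or_nonempty with h | h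
  · obtain ⟨rfl, rfl⟩ := Finset.union_eq_empty.mp h
    simp [vol, cutEdges, edgesWithin]
  · rw [← le_div_iff₀ (vol_pos_of_nonempty A hdeg h)]
    refine csInf_le ⟨0, ?_⟩ ⟨S1, S2, h, hd, rfl⟩
    rintro x ⟨T1, T2, _, _, rfl⟩
    exact bipRatio_terms_nonneg A T1 T2

/-! ### Level sets and rounding -/

/-- Weight of a pair `(u, v)` on the indicator of the lower of the two levels `x u ^ 2`,
`x v ^ 2`, to be added to `highWeight`: a same-sign edge then costs `1 + 1` while both endpoints
are selected and an opposite-sign edge costs `1 - 1`. A loop counts double in the bipartiteness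
ratio and corresponds to only one ordered pair, so it costs `2 + 2`. -/
noncomputable def lowWeight {U : Type} [DecidableEq U] (x : U → ℝ) (u v : U) : ℝ :=
  if u = v then 2 else if 0 ≤ x u * x v then 1 else -1

/-- Weight of a pair `(u, v)` on the indicator of the higher of the two levels. -/
noncomputable def highWeight {U : Type} [DecidableEq U] (u v : U) : ℝ := if u = v then 2 else 1

/-- `lowWeight` and `highWeight` integrate, over all levels, to at most the quantity in
the Cauchy–Schwarz step. -/
lemma weight_le {U : Type} [DecidableEq U] (x : U → ℝ) (u v : U) :
    highWeight u v * max (x u ^ 2) (x v ^ 2) + lowWeight x u v * min (x u ^ 2) (x v ^ 2) ≤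
      |x u + x v| * (|x u| + |x v|) := by
  unfold highWeight lowWeight
  by_cases huv : u = v
  · subst huv
    have : |x u + x u| = 2 * |x u| := by rw [← two_mul, abs_mul, abs_two]
    simp only [if_true, max_self, min_self, this]
    nlinarith [sq_abs (x u)]
  · simp only [huv, if_false]
    by_cases hs : 0 ≤ x u * x v
    · rw [if_pos hs, one_mul, one_mul, max_add_min]
      have h1 : |x u + x v| = |x u| + |x v| := by
        rcases mul_nonneg_iff.mp hs with h | h
        · rw [abs_of_nonneg h.1, abs_of_nonneg h.2, abs_of_nonneg (add_nonneg h.1 h.2)]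
        · rw [abs_of_nonpos h.1, abs_of_nonpos h.2, abs_of_nonpos (add_nonpos h.1 h.2)]; ring
      rw [h1]
      nlinarith [sq_abs (x u), sq_abs (x v), mul_nonneg (abs_nonneg (x u)) (abs_nonneg (x v))]
    · rw [if_neg hs, one_mul, neg_one_mul, ← sub_eq_add_neg, max_sub_min_eq_abs]
      have h1 : |x u| + |x v| = |x v - x u| := by
        rcases mul_neg_iff.mp (not_le.mp hs) with h | h
        · rw [abs_of_pos h.1, abs_of_neg h.2, abs_of_neg (by linarith)]; ring
        · rw [abs_of_neg h.1, abs_of_pos h.2, abs_of_pos (by linarith)]; ring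
      rw [h1, ← abs_mul]
      apply le_of_eq
      congr 1
      ring

lemma cutEdges_eq {U : Type} [Fintype U] [DecidableEq U] (A : U → U → ℕ) (S : Finset U) :
    cutEdges A S = ∑ u, ∑ v, (A u v : ℝ) * if u ∈ S ∧ v ∉ S then 1 else 0 := by
  have hS : Sᶜ = Finset.univ.filter (· ∉ S) := by ext; simp
  unfold cutEdges
  rw [hS]
  simp only [Finset.sum_filter]
  rw [← Finset.sum_ite_mem_eq S]
  refine Finset.sum_congr rfl fun u _ => ?_
  by_cases hu : u ∈ S <;> simp [hu]

lemma two_mul_edgesWithin_eq {U : Type} [Fintype U] [DecidableEq U] (A : U → U → ℕ)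
    (T : Finset U) :
    2 * edgesWithin A T = ∑ u, ∑ v, (A u v : ℝ) *
      ((if u ∈ T ∧ v ∈ T then 1 else 0) + if u = v ∧ u ∈ T then 1 else 0) := by
  unfold edgesWithin
  simp only [mul_add, Finset.sum_add_distrib]
  rw [mul_div_cancel₀ _ (two_ne_zero)]
  congr 1
  · simp [ite_and, Finset.sum_ite_mem]
  · simp [ite_and, Finset.sum_ite_mem]

/-- At a fixed level `t`, the sets of positive and of negative vertices with `t < x v ^ 2` have
a numerator of the bipartiteness ratio of at most half the weighted sum, over ordered pairs, of
threshold indicators. -/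
lemma level_count {U : Type} [Fintype U] [DecidableEq U] (A : U → U → ℕ)
    (hsym : ∀ u v, A u v = A v u) (x : U → ℝ) (t : ℝ) (ht : 0 ≤ t) (S1 S2 : Finset U)
    (hS1 : ∀ v, v ∈ S1 ↔ 0 < x v ∧ t < x v ^ 2) (hS2 : ∀ v, v ∈ S2 ↔ x v < 0 ∧ t < x v ^ 2) :
    2 * (cutEdges A (S1 ∪ S2) + 2 * (edgesWithin A S1 + edgesWithin A S2)) ≤
      ∑ u, ∑ v, (A u v : ℝ) *
        (highWeight u v * (Set.Iio (max (x u ^ 2) (x v ^ 2))).indicator 1 t +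
          lowWeight x u v * (Set.Iio (min (x u ^ 2) (x v ^ 2))).indicator 1 t) := by
  have hcut : 2 * cutEdges A (S1 ∪ S2) = ∑ u, ∑ v, (A u v : ℝ) *
      ((if u ∈ S1 ∪ S2 ∧ v ∉ S1 ∪ S2 then 1 else 0) +
        if v ∈ S1 ∪ S2 ∧ u ∉ S1 ∪ S2 then 1 else 0) := by
    simp only [mul_add, Finset.sum_add_distrib]
    rw [two_mul, cutEdges_eq]
    congr 1
    rw [Finset.sum_comm]
    exact Finset.sum_congr rfl fun u _ => Finset.sum_congr rfl fun v _ => by rw [hsym]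
  have hsplit : 2 * (cutEdges A (S1 ∪ S2) + 2 * (edgesWithin A S1 + edgesWithin A S2)) =
      2 * cutEdges A (S1 ∪ S2) + (2 * (2 * edgesWithin A S1) + 2 * (2 * edgesWithin A S2)) := by
    ring
  rw [hsplit, hcut, two_mul_edgesWithin_eq, two_mul_edgesWithin_eq]
  simp only [Finset.mul_sum, ← Finset.sum_add_distrib]
  refine Finset.sum_le_sum fun u _ => Finset.sum_le_sum fun v _ => ?_
  simp only [mul_left_comm (2 : ℝ), ← mul_add]
  refine mul_le_mul_of_nonneg_left ?_ (Nat.cast_nonneg _)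
  simp only [Set.indicator_apply, Set.mem_Iio, lt_max_iff, lt_min_iff, Pi.one_apply,
    Finset.mem_union, hS1, hS2, highWeight, lowWeight]
  have hcase : ∀ w, ¬ t < x w ^ 2 ∨ (t < x w ^ 2 ∧ 0 < x w ∧ ¬ x w < 0) ∨
      (t < x w ^ 2 ∧ x w < 0 ∧ ¬ 0 < x w) := by
    intro w
    rcases lt_trichotomy (x w) 0 with h | h | h
    · by_cases ha : t < x w ^ 2
      · exact Or.inr (Or.inr ⟨ha, h, h.not_gt⟩)
      · exact Or.inl ha
    · left
      rw [h]
      norm_num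
      exact ht
    · by_cases ha : t < x w ^ 2
      · exact Or.inr (Or.inl ⟨ha, h, h.not_gt⟩)
      · exact Or.inl ha
  by_cases huv : u = v
  · subst huv
    rcases hcase u with h | ⟨ha, h, h'⟩ | ⟨ha, h, h'⟩
    · simp [h]
    · simp [h, h', ha]; norm_num
    · simp [h, h', ha]; norm_num
  · rcases hcase u with h | ⟨ha, h, h'⟩ | ⟨ha, h, h'⟩ <;>
      rcases hcase v with k | ⟨kb, k, k'⟩ | ⟨kb, k, k'⟩
    · simp [huv, h, k]
    · simp [huv, h, k, k', kb]
    · simp [huv, h, k, k', kb]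
    · simp [huv, h, h', ha, k]
    · simp [huv, h, h', ha, k, k', kb, (mul_pos h k).le]; norm_num
    · simp [huv, h, h', ha, k, k', kb, (mul_neg_of_pos_of_neg h k).not_ge]
    · simp [huv, h, h', ha, k]
    · simp [huv, h, h', ha, k, k', kb, (mul_neg_of_neg_of_pos h k).not_ge]
    · simp [huv, h, h', ha, k, k', kb, (mul_pos_of_neg_of_neg h k).le]; norm_num

lemma sum_row_mul {U : Type} [Fintype U] (A : U → U → ℕ) (f : U → ℝ) :
    ∑ u, ∑ v, (A u v : ℝ) * f u = ∑ u, (mdeg A u : ℝ) * f u := by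
  refine Finset.sum_congr rfl fun u _ => ?_
  rw [← Finset.sum_mul, mdeg, Nat.cast_sum]

lemma sum_col_mul {U : Type} [Fintype U] (A : U → U → ℕ) (hsym : ∀ u v, A u v = A v u)
    (f : U → ℝ) : ∑ u, ∑ v, (A u v : ℝ) * f v = ∑ u, (mdeg A u : ℝ) * f u := by
  rw [Finset.sum_comm, ← sum_row_mul]
  exact Finset.sum_congr rfl fun u _ => Finset.sum_congr rfl fun v _ => by rw [hsym]

/-- The rounding step: integrating `bipRatio_mul_vol_le` over the level sets of `x`. -/
lemma rounding {U : Type} [Fintype U] [DecidableEq U] (A : U → U → ℕ)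
    (hsym : ∀ u v, A u v = A v u) (hdeg : ∀ v, 0 < mdeg A v) (x : U → ℝ) :
    2 * (bipRatio A * ∑ v, (mdeg A v : ℝ) * x v ^ 2) ≤
      ∑ u, ∑ v, (A u v : ℝ) * (|x u + x v| * (|x u| + |x v|)) := by
  have hd : ∑ v, (mdeg A v : ℝ) * x v ^ 2 = ∑ u, ∑ v, (A u v : ℝ) * x u ^ 2 :=
    (sum_row_mul A fun u => x u ^ 2).symm
  have key := layer_cake (ι := (U × U) × Fin 3)
    (fun p => (A p.1.1 p.1.2 : ℝ) *
      ![highWeight p.1.1 p.1.2, lowWeight x p.1.1 p.1.2, -(2 * bipRatio A)] p.2)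
    (fun p => ![max (x p.1.1 ^ 2) (x p.1.2 ^ 2), min (x p.1.1 ^ 2) (x p.1.2 ^ 2),
      x p.1.1 ^ 2] p.2) ?_ ?_
  · simp only [Fintype.sum_prod_type, Fin.sum_univ_three, Matrix.cons_val] at key
    have h1 : ∑ u, ∑ v, ((A u v : ℝ) * highWeight u v * max (x u ^ 2) (x v ^ 2) +
        (A u v : ℝ) * lowWeight x u v * min (x u ^ 2) (x v ^ 2) +
        (A u v : ℝ) * -(2 * bipRatio A) * x u ^ 2) ≤
        ∑ u, ∑ v, ((A u v : ℝ) * (|x u + x v| * (|x u| + |x v|)) -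
          2 * (bipRatio A * ((A u v : ℝ) * x u ^ 2))) := by
      refine Finset.sum_le_sum fun u _ => Finset.sum_le_sum fun v _ => ?_
      have := mul_le_mul_of_nonneg_left (weight_le x u v) (Nat.cast_nonneg (α := ℝ) (A u v))
      linarith
    have h2 := key.trans h1
    simp only [Finset.sum_sub_distrib, ← Finset.mul_sum] at h2
    rw [← hd] at h2
    linarith
  · rintro ⟨⟨u, v⟩, i⟩
    fin_cases i
    · exact (sq_nonneg (x u)).trans (le_max_left _ _)
    · exact le_min (sq_nonneg _) (sq_nonneg _)
    · exact sq_nonneg (x u)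
  · intro t ht
    set S1 := Finset.univ.filter fun v => 0 < x v ∧ t < x v ^ 2 with hS1
    set S2 := Finset.univ.filter fun v => x v < 0 ∧ t < x v ^ 2 with hS2
    have hm1 : ∀ v, v ∈ S1 ↔ 0 < x v ∧ t < x v ^ 2 := by simp [hS1]
    have hm2 : ∀ v, v ∈ S2 ↔ x v < 0 ∧ t < x v ^ 2 := by simp [hS2]
    have hdis : Disjoint S1 S2 := by
      rw [Finset.disjoint_left]
      intro v h1 h2
      exact lt_asymm ((hm1 v).mp h1).1 ((hm2 v).mp h2).1
    have hvol : vol A (S1 ∪ S2) =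
        ∑ u, ∑ v, (A u v : ℝ) * (Set.Iio (x u ^ 2)).indicator 1 t := by
      rw [sum_row_mul A fun u => (Set.Iio (x u ^ 2)).indicator 1 t, vol,
        ← Finset.sum_subset (Finset.subset_univ (S1 ∪ S2))]
      · refine Finset.sum_congr rfl fun v hv => ?_
        have : t < x v ^ 2 := by
          rcases Finset.mem_union.mp hv with h | h
          · exact ((hm1 v).mp h).2
          · exact ((hm2 v).mp h).2
        simp [this]
      · intro v _ hv
        have : ¬ t < x v ^ 2 := by
          intro hlt
          -- `0 ≤ t` excludes the vertices where `x` vanishes.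
          have hx0 : x v ≠ 0 := by
            rintro h0
            rw [h0] at hlt
            norm_num at hlt
            linarith
          apply hv
          rcases lt_or_gt_of_ne hx0 with h | h
          · exact Finset.mem_union_right _ ((hm2 v).mpr ⟨h, hlt⟩)
          · exact Finset.mem_union_left _ ((hm1 v).mpr ⟨h, hlt⟩)
        simp [this]
    have h1 := level_count A hsym x t ht S1 S2 hm1 hm2
    have h2 := bipRatio_mul_vol_le A hdeg S1 S2 hdis
    rw [hvol] at h2
    simp only [Fintype.sum_prod_type, Fin.sum_univ_three, Matrix.cons_val]
    have h3 := sub_nonneg.mpr ((mul_le_mul_of_nonneg_left h2 zero_le_two).trans h1)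
    refine h3.trans (le_of_eq ?_)
    simp only [Finset.mul_sum, ← Finset.sum_sub_distrib]
    refine Finset.sum_congr rfl fun u _ => Finset.sum_congr rfl fun v _ => ?_
    ring

/-! ### The eigenvalue bound -/

/-- A root of the characteristic polynomial has an eigenvector `z`; the vector returned is
`z v / √(deg v)`, for which the eigenvalue equation is free of square roots. -/
lemma exists_eigenvector {U : Type} [Fintype U] [DecidableEq U] (A : U → U → ℕ)
    (hdeg : ∀ v, 0 < mdeg A v) (l : ℝ) (hl : (normAdj A).charpoly.IsRoot l) :
    ∃ x : U → ℝ, x ≠ 0 ∧ ∀ u, ∑ v, (A u v : ℝ) * x v = l * (mdeg A u * x u) := by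
  have hdet : (Matrix.scalar U l - normAdj A).det = 0 := by
    rw [← Matrix.eval_charpoly]; exact hl
  obtain ⟨z, hz, hz0⟩ := Matrix.exists_mulVec_eq_zero_iff.mpr hdet
  have hs : ∀ v, 0 < Real.sqrt (mdeg A v) := fun v =>
    Real.sqrt_pos.mpr (by exact_mod_cast hdeg v)
  refine ⟨fun v => z v / Real.sqrt (mdeg A v), ?_, ?_⟩
  · intro h
    apply hz
    funext v
    have := congrFun h v
    simpa [(hs v).ne'] using this
  · intro u
    have h1 := congrFun hz0 u
    rw [Matrix.sub_mulVec] at h1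
    have h2 : ∑ v, normAdj A u v * z v = l * z u := by
      have h3 : (Matrix.scalar U l).mulVec z u = l * z u := by
        simp [Matrix.scalar_apply, Matrix.mulVec_diagonal]
      rw [Pi.sub_apply, h3] at h1
      simp only [Matrix.mulVec, dotProduct, Pi.zero_apply] at h1
      linarith
    have h4 : ∑ v, (A u v : ℝ) * (z v / Real.sqrt (mdeg A v)) =
        Real.sqrt (mdeg A u) * ∑ v, normAdj A u v * z v := by
      rw [Finset.mul_sum]
      refine Finset.sum_congr rfl fun v _ => ?_
      have := (hs u).ne'
      have := (hs v).ne'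
      simp only [normAdj, Matrix.of_apply]
      field_simp
    rw [h4, h2]
    have h5 : (mdeg A u : ℝ) = Real.sqrt (mdeg A u) * Real.sqrt (mdeg A u) :=
      (Real.mul_self_sqrt (by positivity)).symm
    have := (hs u).ne'
    conv_rhs => rw [h5]
    field_simp

/-- Every eigenvalue of the normalized adjacency matrix satisfies the bound. -/
lemma trevisan_of_isRoot {U : Type} [Fintype U] [DecidableEq U] (A : U → U → ℕ)
    (hsym : ∀ u v, A u v = A v u) (hdeg : ∀ v, 0 < mdeg A v) (l : ℝ)
    (hl : (normAdj A).charpoly.IsRoot l) : -1 + bipRatio A ^ 2 / 2 ≤ l := by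
  obtain ⟨x, hx, hev⟩ := exists_eigenvector A hdeg l hl
  set P := ∑ v, (mdeg A v : ℝ) * x v ^ 2 with hP
  have hPpos : 0 < P := by
    obtain ⟨w, hw⟩ := Function.ne_iff.mp hx
    have hw : x w ≠ 0 := hw
    have hdw : (0 : ℝ) < mdeg A w := by exact_mod_cast hdeg w
    exact Finset.sum_pos' (fun v _ => by positivity) ⟨w, Finset.mem_univ w, by positivity⟩
  have hcross : ∑ u, ∑ v, (A u v : ℝ) * (x u * x v) = l * P := by
    rw [hP, Finset.mul_sum]
    refine Finset.sum_congr rfl fun u _ => ?_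
    calc ∑ v, (A u v : ℝ) * (x u * x v) = x u * ∑ v, (A u v : ℝ) * x v := by
          rw [Finset.mul_sum]; exact Finset.sum_congr rfl fun v _ => by ring
      _ = _ := by rw [hev]; ring
  have hrow := sum_row_mul A (fun u => x u ^ 2)
  have hcol := sum_col_mul A hsym (fun u => x u ^ 2)
  have hplus : ∑ u, ∑ v, (A u v : ℝ) * (x u + x v) ^ 2 = 2 * (1 + l) * P := by
    have : ∀ u v, (A u v : ℝ) * (x u + x v) ^ 2 = (A u v : ℝ) * x u ^ 2 +
        (A u v : ℝ) * x v ^ 2 + 2 * ((A u v : ℝ) * (x u * x v)) := fun u v => by ring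
    simp only [this, Finset.sum_add_distrib, ← Finset.mul_sum]
    rw [hcross, hrow, hcol]
    ring
  have habs : ∑ u, ∑ v, (A u v : ℝ) * (|x u| + |x v|) ^ 2 ≤ 4 * P := by
    have : ∑ u, ∑ v, (A u v : ℝ) * (|x u| + |x v|) ^ 2 ≤
        ∑ u, ∑ v, (2 * ((A u v : ℝ) * x u ^ 2) + 2 * ((A u v : ℝ) * x v ^ 2)) := by
      refine Finset.sum_le_sum fun u _ => Finset.sum_le_sum fun v _ => ?_
      have h1 : (|x u| + |x v|) ^ 2 ≤ 2 * x u ^ 2 + 2 * x v ^ 2 := by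
        nlinarith [sq_abs (x u), sq_abs (x v), sq_nonneg (|x u| - |x v|)]
      calc _ ≤ (A u v : ℝ) * (2 * x u ^ 2 + 2 * x v ^ 2) := by gcongr
        _ = _ := by ring
    refine this.trans (le_of_eq ?_)
    simp only [Finset.sum_add_distrib, ← Finset.mul_sum]
    rw [hrow, hcol]
    ring
  have hCS : (∑ u, ∑ v, (A u v : ℝ) * (|x u + x v| * (|x u| + |x v|))) ^ 2 ≤
      (∑ u, ∑ v, (A u v : ℝ) * (x u + x v) ^ 2) *
        ∑ u, ∑ v, (A u v : ℝ) * (|x u| + |x v|) ^ 2 := by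
    simp only [← Fintype.sum_prod_type']
    refine Finset.sum_sq_le_sum_mul_sum_of_sq_le_mul _ (fun p _ => by positivity)
      (fun p _ => by positivity) fun p _ => ?_
    rw [mul_pow, mul_pow, sq_abs]
    exact le_of_eq (by ring)
  have hround := rounding A hsym hdeg x
  rw [← hP] at hround
  have hβ := bipRatio_nonneg A
  have hl0 : 0 ≤ 2 * (1 + l) * P := by rw [← hplus]; positivity
  have hfin : (2 * (bipRatio A * P)) ^ 2 ≤ 2 * (1 + l) * P * (4 * P) :=
    calc _ ≤ _ := pow_le_pow_left₀ (by positivity) hround 2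
      _ ≤ _ := hCS
      _ ≤ _ := by rw [hplus]; gcongr
  have h2 : bipRatio A ^ 2 * (4 * P ^ 2) ≤ 2 * (1 + l) * (4 * P ^ 2) := by nlinarith
  have h3 := le_of_mul_le_mul_right h2 (by positivity)
  linarith

/-- **Trevisan's inequality.** For a finite multigraph with positive degrees and sorted
eigenvalues `λ1 ≥ … ≥ λ_{|V|}` of its normalized adjacency matrix,
`λ_{|V|} ≥ −1 + β(G)²/2`. -/
theorem statement17 {U : Type} [Fintype U] [DecidableEq U] [Nonempty U] (A : U → U → ℕ)
    (hsym : ∀ u v, A u v = A v u) (hdeg : ∀ v, 0 < mdeg A v)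
    (lam : Fin (Fintype.card U) → ℝ) (hmono : Antitone lam)
    (hchar : (normAdj A).charpoly = ∏ k, (Polynomial.X - Polynomial.C (lam k))) :
    -1 + bipRatio A ^ 2 / 2 ≤
      lam ⟨Fintype.card U - 1, by have := Fintype.card_pos (α := U); omega⟩ := by
  apply trevisan_of_isRoot A hsym hdeg
  rw [hchar, Polynomial.IsRoot, Polynomial.eval_prod]
  exact Finset.prod_eq_zero
    (Finset.mem_univ (⟨Fintype.card U - 1, by have := Fintype.card_pos (α := U); omega⟩ :
      Fin (Fintype.card U))) (by simp)
end

section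
/- Let G = (V,E) be a finite undirected multigraph on n vertices with all degrees positive, à its normalized adjacency matrix, λ1 ≥ λ2 ≥ … ≥ λn the eigenvalues of Ã, and λ = max{|λ2|, |λn|}. Let π be the distribution π(v) = deg(v)/Σ_{u∈V} deg(u). Then for every initial probability distribution π0 on V and every t ∈ ℕ, ‖π0(DA)^t − π‖₂ ≤ √(d_max/d_min)·λ^t, where d_max = max_v deg(v) and d_min = min_v deg(v). -/
/-! Write `s v = √(deg v)` and `B = normAdj A`. Put `r_t = π0 (DA)^t - π`; since `π` is stationary,
`r_{t+1} = r_t (DA)`, and the rescaled vector `z_t = r_t / s` satisfies `z_{t+1} = B z_t`. The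
entries of every `r_t` sum to zero, which says that `z_t` is orthogonal to `s`, an eigenvector of
`B` for the eigenvalue `1`.

The spectral input is `norm_apply_le_of_orthogonal`: on the orthogonal complement of `s`, the
symmetric operator `B` contracts norms by `max |λ₂| |λₙ|`. Expand in an orthonormal eigenbasis
sorted like the `λₖ`. All coefficients but the first are multiplied by some `λₖ` lying between
`λₙ` and `λ₂`. For the first one, all eigenvalues are at most `1` (`dotProduct_normAdj_le`);
either `λ₂ = 1` and there is nothing to show, or the eigenvalue `1` is simple, the first basis
vector is proportional to `s`, and the first coefficient vanishes.

Hence `‖z_t‖ ≤ λ^t ‖z_0‖`. Finally `‖r_t‖² ≤ d_max ‖z_t‖²`, and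
`‖z_0‖² = ∑ π0(v)² / deg v - 1 / ∑ deg ≤ 1 / d_min`. -/

open Finset

open scoped Classical

open scoped RealInnerProductSpace

/-- A symmetric operator whose sorted eigenvalues are at most `1` and which fixes `φ ≠ 0`
contracts norms on the orthogonal complement of `φ` by the larger of the absolute values of its
second and its last eigenvalue. -/
lemma norm_apply_le_of_orthogonal {E : Type*} [NormedAddCommGroup E] [InnerProductSpace ℝ E]
    {n : ℕ} (hn : 1 < n) (b : OrthonormalBasis (Fin n) ℝ E) (T : E →ₗ[ℝ] E) (hT : T.IsSymmetric)
    (lam : Fin n → ℝ) (hmono : Antitone lam) (hb : ∀ k, T (b k) = lam k • b k)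
    (hle : ∀ k, lam k ≤ 1) (φ : E) (hφ : φ ≠ 0) (hTφ : T φ = φ) (y : E) (hy : ⟪φ, y⟫ = 0) :
    ‖T y‖ ≤ max |lam ⟨1, hn⟩| |lam ⟨n - 1, by omega⟩| * ‖y‖ := by
  set L := max |lam ⟨1, hn⟩| |lam ⟨n - 1, by omega⟩| with hL
  have hL0 : 0 ≤ L := (abs_nonneg _).trans (le_max_left _ _)
  have hcoef : ∀ k x, ⟪b k, T x⟫ = lam k * ⟪b k, x⟫ := fun k x => by
    rw [← hT, hb, inner_smul_left]; rfl
  have hlast : ∀ k, lam ⟨n - 1, by omega⟩ ≤ lam k := fun k =>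
    hmono (Fin.mk_le_mk.2 (by omega : k.1 ≤ n - 1))
  have hbound : ∀ k, ⟪b k, T y⟫ ^ 2 ≤ L ^ 2 * ⟪b k, y⟫ ^ 2 := by
    intro k
    rw [hcoef, mul_pow]
    have key : |lam k| ≤ L → lam k ^ 2 * ⟪b k, y⟫ ^ 2 ≤ L ^ 2 * ⟪b k, y⟫ ^ 2 := fun h =>
      mul_le_mul_of_nonneg_right (sq_le_sq' (by linarith [neg_abs_le (lam k)])
        ((le_abs_self _).trans h)) (sq_nonneg _)
    have hlow : -L ≤ lam k :=
      (neg_le_neg (le_max_right _ _)).trans ((neg_abs_le _).trans (hlast k))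
    have hL1 : lam ⟨1, hn⟩ ≤ L := (le_abs_self _).trans (le_max_left _ _)
    by_cases hk : 1 ≤ k.1
    · exact key (abs_le.2 ⟨hlow, (hmono (Fin.mk_le_mk.2 hk)).trans hL1⟩)
    by_cases h1 : 1 ≤ lam ⟨1, hn⟩
    · exact key (abs_le.2 ⟨hlow, (hle k).trans (h1.trans hL1)⟩)
    -- The eigenvalue `1` is simple, so `φ` is orthogonal to every other basis vector.
    have hort : ∀ j, j ≠ k → ⟪b j, φ⟫ = 0 := by
      intro j hj
      have hj1 : 1 ≤ j.1 := by
        have : j.1 ≠ k.1 := fun h => hj (Fin.ext h)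
        omega
      have hlt : lam j < 1 := (hmono (Fin.mk_le_mk.2 hj1 : (⟨1, hn⟩ : Fin n) ≤ j)).trans_lt
        (not_le.1 h1)
      have := hcoef j φ
      rw [hTφ] at this
      have h2 : (1 - lam j) * ⟪b j, φ⟫ = 0 := by linarith
      exact (mul_eq_zero.1 h2).resolve_left (by linarith)
    have hsumy := b.sum_inner_mul_inner φ y
    rw [hy, Finset.sum_eq_single k
      (fun j _ hj => by rw [real_inner_comm, hort j hj, zero_mul]) (by simp)] at hsumy
    have hk0 : ⟪φ, b k⟫ ≠ 0 := by
      intro h0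
      have h3 := b.sum_inner_mul_inner φ φ
      rw [Finset.sum_eq_single k
        (fun j _ hj => by rw [hort j hj, mul_zero]) (by simp), h0, zero_mul] at h3
      exact hφ (inner_self_eq_zero.1 h3.symm)
    rw [(mul_eq_zero.1 hsumy).resolve_left hk0]
    simp
  refine (sq_le_sq₀ (norm_nonneg _) (mul_nonneg hL0 (norm_nonneg _))).1 ?_
  rw [mul_pow, ← b.sum_sq_inner_right, ← b.sum_sq_inner_right, Finset.mul_sum]
  exact Finset.sum_le_sum fun k _ => hbound k

section

variable {U : Type} [Fintype U] (A : U → U → ℕ)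

lemma normAdj_isHermitian (hsym : ∀ u v, A u v = A v u) : (normAdj A).IsHermitian := by
  ext u v
  simp [normAdj, hsym u v, mul_comm]

lemma sum_cast_eq_mdeg (v : U) : ∑ u, (A v u : ℝ) = mdeg A v := by simp [mdeg]

/-- Twice the difference of the two sides is `∑ A(u,v) (x u / √deg u - x v / √deg v)²`. -/
lemma dotProduct_normAdj_le (hsym : ∀ u v, A u v = A v u) (hdeg : ∀ v, 0 < mdeg A v)
    (x : U → ℝ) : x ⬝ᵥ (normAdj A).mulVec x ≤ x ⬝ᵥ x := by
  have hs : ∀ v, 0 < Real.sqrt (mdeg A v) := fun v =>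
    Real.sqrt_pos.2 (Nat.cast_pos.2 (hdeg v))
  set w : U → ℝ := fun v => x v / Real.sqrt (mdeg A v) with hw
  have hw2 : ∀ v, (mdeg A v : ℝ) * w v ^ 2 = x v * x v := fun v => by
    have : (mdeg A v : ℝ) ≠ 0 := (Nat.cast_pos.2 (hdeg v)).ne'
    rw [hw]; simp only [div_pow, Real.sq_sqrt (Nat.cast_nonneg (mdeg A v))]
    field_simp
  have h1 : x ⬝ᵥ (normAdj A).mulVec x = ∑ u, ∑ v, (A u v : ℝ) * (w u * w v) := by
    simp only [dotProduct, Matrix.mulVec, Finset.mul_sum]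
    refine Finset.sum_congr rfl fun u _ => Finset.sum_congr rfl fun v _ => ?_
    have := (hs u).ne'
    have := (hs v).ne'
    simp only [normAdj, Matrix.of_apply, hw]
    field_simp
  have h2 : x ⬝ᵥ x = ∑ u, ∑ v, (A u v : ℝ) * w u ^ 2 := by
    simp only [dotProduct, ← Finset.sum_mul, sum_cast_eq_mdeg, hw2]
  have h3 : x ⬝ᵥ x = ∑ u, ∑ v, (A u v : ℝ) * w v ^ 2 := by
    rw [h2, Finset.sum_comm]
    simp only [hsym]
  have h4 : (0 : ℝ) ≤ ∑ u, ∑ v, (A u v : ℝ) * (w u - w v) ^ 2 :=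
    Finset.sum_nonneg fun u _ => Finset.sum_nonneg fun v _ => by positivity
  have h5 : ∑ u, ∑ v, (A u v : ℝ) * (w u - w v) ^ 2 =
      (∑ u, ∑ v, (A u v : ℝ) * w u ^ 2) + (∑ u, ∑ v, (A u v : ℝ) * w v ^ 2)
        - 2 * ∑ u, ∑ v, (A u v : ℝ) * (w u * w v) := by
    simp only [Finset.mul_sum, ← Finset.sum_add_distrib, ← Finset.sum_sub_distrib]
    exact Finset.sum_congr rfl fun u _ => Finset.sum_congr rfl fun v _ => by ring
  linarith

lemma normAdj_mulVec_sqrt (hdeg : ∀ v, 0 < mdeg A v) :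
    (normAdj A).mulVec (fun v => Real.sqrt (mdeg A v)) = fun v => Real.sqrt (mdeg A v) := by
  have hs : ∀ v, Real.sqrt (mdeg A v) ≠ 0 := fun v =>
    (Real.sqrt_pos.2 (Nat.cast_pos.2 (hdeg v))).ne'
  ext u
  have : ∀ v, (A u v : ℝ) / (Real.sqrt (mdeg A u) * Real.sqrt (mdeg A v)) *
      Real.sqrt (mdeg A v) = (A u v : ℝ) / Real.sqrt (mdeg A u) := fun v => by
    have := hs u
    have := hs v
    field_simp
  simp only [Matrix.mulVec, dotProduct, normAdj, Matrix.of_apply, this, ← Finset.sum_div,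
    sum_cast_eq_mdeg, Real.div_sqrt]

/-- Conjugating by the square roots of the degrees turns the walk into `normAdj A`. -/
lemma vecMul_transition_div (hsym : ∀ u v, A u v = A v u) (r : U → ℝ) :
    (fun v => Matrix.vecMul r (transition A) v / Real.sqrt (mdeg A v)) =
      (normAdj A).mulVec (fun v => r v / Real.sqrt (mdeg A v)) := by
  ext v
  simp only [Matrix.vecMul, Matrix.mulVec, dotProduct, normAdj, transition, Matrix.of_apply,
    Finset.sum_div]
  refine Finset.sum_congr rfl fun u _ => ?_
  rw [hsym u v]
  nth_rw 1 [← Real.mul_self_sqrt (Nat.cast_nonneg (mdeg A u))]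
  simp only [div_eq_mul_inv, mul_inv]
  ring

lemma sum_vecMul_transition (hdeg : ∀ v, 0 < mdeg A v) (r : U → ℝ) :
    ∑ v, Matrix.vecMul r (transition A) v = ∑ v, r v := by
  simp only [Matrix.vecMul, dotProduct, transition, Matrix.of_apply]
  rw [Finset.sum_comm]
  refine Finset.sum_congr rfl fun u _ => ?_
  rw [← Finset.mul_sum, ← Finset.sum_div, sum_cast_eq_mdeg,
    div_self (Nat.cast_pos.2 (hdeg u)).ne', mul_one]

lemma statDist_vecMul_transition (hsym : ∀ u v, A u v = A v u) (hdeg : ∀ v, 0 < mdeg A v) :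
    Matrix.vecMul (statDist A) (transition A) = statDist A := by
  ext v
  have : ∀ u, (mdeg A u : ℝ) / (∑ u, (mdeg A u : ℝ)) * ((A u v : ℝ) / mdeg A u) =
      (A v u : ℝ) / ∑ u, (mdeg A u : ℝ) := fun u => by
    have : (mdeg A u : ℝ) ≠ 0 := (Nat.cast_pos.2 (hdeg u)).ne'
    rw [hsym u v]
    field_simp
  simp only [Matrix.vecMul, dotProduct, transition, Matrix.of_apply, statDist, this,
    ← Finset.sum_div, sum_cast_eq_mdeg]

/-- The expansion of the square leaves `∑ π0(v)² / deg v - 1 / ∑ deg`. -/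
lemma sum_sub_statDist_sq_div_le [Nonempty U] (hdeg : ∀ v, 0 < mdeg A v)
    (π0 : U → ℝ) (hsum : ∑ v, π0 v = 1) :
    ∑ v, (π0 v - statDist A v) ^ 2 / mdeg A v ≤ ∑ v, π0 v ^ 2 / mdeg A v := by
  set M : ℝ := ∑ u, (mdeg A u : ℝ) with hM
  have hMpos : 0 < M := Finset.sum_pos (fun v _ => Nat.cast_pos.2 (hdeg v)) univ_nonempty
  have h : ∀ v, (π0 v - statDist A v) ^ 2 / mdeg A v =
      π0 v ^ 2 / mdeg A v - π0 v * (2 / M) + (mdeg A v : ℝ) * (1 / M ^ 2) := fun v => by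
    have : (mdeg A v : ℝ) ≠ 0 := (Nat.cast_pos.2 (hdeg v)).ne'
    simp only [statDist, ← hM]
    field_simp
    ring
  have h2 : M * (1 / M ^ 2) = 1 / M := by field_simp
  have h3 : (2 : ℝ) / M = 1 / M + 1 / M := by ring
  simp only [h, Finset.sum_add_distrib, Finset.sum_sub_distrib, ← Finset.sum_mul, hsum, ← hM, h2]
  have : 0 < 1 / M := by positivity
  linarith

end

/-- The case of the contraction estimate for `normAdj A` and the vector of square roots of the
degrees. -/
lemma norm_normAdj_le {U : Type} [Fintype U] [DecidableEq U] [Nonempty U] (A : U → U → ℕ)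
    (hsym : ∀ u v, A u v = A v u) (hdeg : ∀ v, 0 < mdeg A v)
    (hU : 1 < Fintype.card U) (hU' : Fintype.card U - 1 < Fintype.card U)
    (lam : Fin (Fintype.card U) → ℝ) (hmono : Antitone lam)
    (hchar : (normAdj A).charpoly = ∏ k, (Polynomial.X - Polynomial.C (lam k)))
    (y : U → ℝ) (hy : ∑ v, Real.sqrt (mdeg A v) * y v = 0) :
    ‖WithLp.toLp 2 ((normAdj A).mulVec y)‖ ≤
      max |lam ⟨1, hU⟩| |lam ⟨Fintype.card U - 1, hU'⟩| * ‖WithLp.toLp 2 y‖ := by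
  have hA := normAdj_isHermitian A hsym
  have hT : (Matrix.toEuclideanLin (normAdj A)).IsSymmetric :=
    Matrix.isSymmetric_toEuclideanLin_iff.2 hA
  have hlam : lam = hT.eigenvalues finrank_euclideanSpace := by
    have h1 := hA.sort_roots_charpoly_eq_eigenvalues₀
    have h2 : (normAdj A).charpoly.roots = Multiset.map lam Finset.univ.val := by
      rw [hchar, Polynomial.roots_prod]
      · simp
      · simp [Finset.prod_ne_zero_iff, Polynomial.X_sub_C_ne_zero]
    refine List.ofFn_inj.1 (Eq.trans ?_ h1)
    rw [h2]
    simp only [Fin.univ_val_map, Multiset.map_coe, List.map_ofFn, Function.comp_def,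
      RCLike.re_to_real, Multiset.coe_sort]
    refine (List.mergeSort_of_pairwise ?_).symm
    simp_rw [decide_eq_true_eq, ← List.sortedGE_iff_pairwise]
    exact hmono.sortedGE_ofFn
  have hb : ∀ k, Matrix.toEuclideanLin (normAdj A) (hT.eigenvectorBasis finrank_euclideanSpace k) =
      lam k • hT.eigenvectorBasis finrank_euclideanSpace k := fun k => by
    rw [hlam]; exact hT.apply_eigenvectorBasis _ k
  have hle : ∀ k, lam k ≤ 1 := by
    intro k
    set e := hT.eigenvectorBasis finrank_euclideanSpace k with he
    have hq := dotProduct_normAdj_le A hsym hdeg (WithLp.ofLp e)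
    have h1 : (normAdj A).mulVec (WithLp.ofLp e) = lam k • WithLp.ofLp e :=
      congrArg WithLp.ofLp (hb k)
    have h2 : WithLp.ofLp e ⬝ᵥ WithLp.ofLp e = 1 := by
      have h3 : ⟪e, e⟫ = 1 := by
        rw [real_inner_self_eq_norm_sq, he, OrthonormalBasis.norm_eq_one, one_pow]
      rw [← h3, EuclideanSpace.inner_eq_star_dotProduct]
      simp
    rw [h1, dotProduct_smul, h2, smul_eq_mul, mul_one] at hq
    exact hq
  refine norm_apply_le_of_orthogonal hU (hT.eigenvectorBasis finrank_euclideanSpace)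
    (Matrix.toEuclideanLin (normAdj A)) hT lam hmono hb hle
    (WithLp.toLp 2 fun v => Real.sqrt (mdeg A v)) ?_ ?_ (WithLp.toLp 2 y) ?_
  · intro h
    obtain ⟨v⟩ := ‹Nonempty U›
    exact (Real.sqrt_pos.2 (Nat.cast_pos.2 (hdeg v))).ne' (congrFun (congrArg WithLp.ofLp h) v)
  · exact congrArg (WithLp.toLp 2) (normAdj_mulVec_sqrt A hdeg)
  · rw [← hy, PiLp.inner_apply]
    simp [mul_comm]

/-- **Mixing rate for general graphs.** For a finite multigraph with positive degrees,
sorted eigenvalues `λ1 ≥ … ≥ λn` of its normalized adjacency matrix and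
`λ = max{|λ2|, |λn|}`: for every initial probability distribution `π0` and every `t`,
`‖π0 (DA)^t − π‖₂ ≤ √(d_max/d_min) λ^t`. -/
theorem statement18 {U : Type} [Fintype U] [DecidableEq U] [Nonempty U] (A : U → U → ℕ)
    (hsym : ∀ u v, A u v = A v u) (hdeg : ∀ v, 0 < mdeg A v)
    (hU : 1 < Fintype.card U)
    (lam : Fin (Fintype.card U) → ℝ) (hmono : Antitone lam)
    (hchar : (normAdj A).charpoly = ∏ k, (Polynomial.X - Polynomial.C (lam k)))
    (π0 : U → ℝ) (hπ0 : ∀ v, 0 ≤ π0 v) (hsum : ∑ v, π0 v = 1) (t : ℕ) :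
    Real.sqrt (∑ v, (Matrix.vecMul π0 (transition A ^ t) v - statDist A v) ^ 2) ≤
      Real.sqrt ((dmaxDeg A : ℝ) / (dminDeg A : ℝ)) *
        max |lam ⟨1, hU⟩| |lam ⟨Fintype.card U - 1, by omega⟩| ^ t := by
  set L := max |lam ⟨1, hU⟩| |lam ⟨Fintype.card U - 1, by omega⟩| with hL
  have hL0 : 0 ≤ L := (abs_nonneg _).trans (le_max_left _ _)
  have hd : ∀ v, (0 : ℝ) < mdeg A v := fun v => Nat.cast_pos.2 (hdeg v)
  set r : ℕ → U → ℝ := fun t => Matrix.vecMul (π0 - statDist A) (transition A ^ t) with hr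
  set z : ℕ → U → ℝ := fun t v => r t v / Real.sqrt (mdeg A v) with hz
  have hstat : ∀ t, Matrix.vecMul (statDist A) (transition A ^ t) = statDist A := by
    intro t
    induction t with
    | zero => simp
    | succ t ih => rw [pow_succ, ← Matrix.vecMul_vecMul, ih, statDist_vecMul_transition A hsym hdeg]
  have hrsucc : ∀ t, r (t + 1) = Matrix.vecMul (r t) (transition A) := fun t => by
    simp only [hr, pow_succ, Matrix.vecMul_vecMul]
  have hrsum : ∀ t, ∑ v, r t v = 0 := by
    intro t
    induction t with
    | zero =>
      have hM : (0 : ℝ) < ∑ u, (mdeg A u : ℝ) := Finset.sum_pos (fun v _ => hd v) univ_nonempty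
      simp only [hr, pow_zero, Matrix.vecMul_one, Pi.sub_apply, Finset.sum_sub_distrib, hsum,
        statDist, ← Finset.sum_div, div_self hM.ne', sub_self]
    | succ t ih => rw [hrsucc, sum_vecMul_transition A hdeg, ih]
  have hzsucc : ∀ t, z (t + 1) = (normAdj A).mulVec (z t) := fun t => by
    simp only [hz, hrsucc]
    exact vecMul_transition_div A hsym (r t)
  have hzort : ∀ t, ∑ v, Real.sqrt (mdeg A v) * z t v = 0 := fun t => by
    rw [← hrsum t]
    exact Finset.sum_congr rfl fun v _ => mul_div_cancel₀ _ (Real.sqrt_pos.2 (hd v)).ne'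
  have hznorm : ∀ t, ‖WithLp.toLp 2 (z t)‖ ≤ L ^ t * ‖WithLp.toLp 2 (z 0)‖ := by
    intro t
    induction t with
    | zero => simp
    | succ t ih =>
      rw [hzsucc, pow_succ', mul_assoc]
      exact (norm_normAdj_le A hsym hdeg hU (by omega) lam hmono hchar (z t) (hzort t)).trans
        (mul_le_mul_of_nonneg_left ih hL0)
  have hzsq : ∀ t, ‖WithLp.toLp 2 (z t)‖ ^ 2 = ∑ v, r t v ^ 2 / mdeg A v := fun t => by
    rw [EuclideanSpace.real_norm_sq_eq]
    simp only [hz, div_pow, Real.sq_sqrt (hd _).le]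
  obtain ⟨v₀, hv₀⟩ : ∃ v, mdeg A v = dminDeg A := Nat.sInf_mem (Set.range_nonempty (mdeg A))
  have hmin0 : (0 : ℝ) < dminDeg A := hv₀ ▸ hd v₀
  have hmin : ∀ v, (dminDeg A : ℝ) ≤ mdeg A v := fun v =>
    Nat.cast_le.2 (Nat.sInf_le (Set.mem_range_self v))
  have hmax : ∀ v, (mdeg A v : ℝ) ≤ dmaxDeg A := fun v =>
    Nat.cast_le.2 (le_ciSup (Set.finite_range (mdeg A)).bddAbove v)
  have h0 : ‖WithLp.toLp 2 (z 0)‖ ^ 2 ≤ 1 / dminDeg A := by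
    rw [hzsq]
    simp only [hr, pow_zero, Matrix.vecMul_one, Pi.sub_apply]
    refine (sum_sub_statDist_sq_div_le A hdeg π0 hsum).trans ?_
    rw [← hsum, Finset.sum_div]
    refine Finset.sum_le_sum fun v _ => ?_
    have hle1 : π0 v ≤ 1 := hsum ▸ Finset.single_le_sum (fun u _ => hπ0 u) (Finset.mem_univ v)
    exact div_le_div₀ (hπ0 v) (by nlinarith [hπ0 v]) hmin0 (hmin v)
  have hrt : ∀ v, Matrix.vecMul π0 (transition A ^ t) v - statDist A v = r t v := fun v => by
    simp only [hr, Matrix.sub_vecMul, hstat, Pi.sub_apply]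
  simp only [hrt]
  have hfin : ∑ v, r t v ^ 2 ≤ (dmaxDeg A : ℝ) / dminDeg A * (L ^ t) ^ 2 := by
    calc ∑ v, r t v ^ 2 ≤ ∑ v, (dmaxDeg A : ℝ) * (r t v ^ 2 / mdeg A v) := by
          refine Finset.sum_le_sum fun v _ => ?_
          rw [mul_div_assoc', le_div_iff₀ (hd v), mul_comm]
          exact mul_le_mul_of_nonneg_right (hmax v) (sq_nonneg _)
      _ = dmaxDeg A * ‖WithLp.toLp 2 (z t)‖ ^ 2 := by rw [hzsq, Finset.mul_sum]
      _ ≤ dmaxDeg A * (L ^ t * ‖WithLp.toLp 2 (z 0)‖) ^ 2 := by gcongr; exact hznorm t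
      _ ≤ dmaxDeg A * ((L ^ t) ^ 2 * (1 / dminDeg A)) := by rw [mul_pow]; gcongr
      _ = _ := by ring
  calc Real.sqrt (∑ v, r t v ^ 2)
      ≤ Real.sqrt ((dmaxDeg A : ℝ) / dminDeg A * (L ^ t) ^ 2) := Real.sqrt_le_sqrt hfin
    _ = _ := by rw [Real.sqrt_mul (by positivity), Real.sqrt_sq (pow_nonneg hL0 t)]
end
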